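/- With the apparatus fixed and p sufficiently large in terms of k, suppose that a and b are integers with 0 ≤ a < b ≤ θ^{−1} and b ≥ (k−t−1)a. Then there exists a constant C depending at most on s, k, r, t, N such that K_{a,b}(X) ≤ C·M^{μb+νa}·(M^{tb−a})^r·J_{s+r,k}(X/M^b)^{1−1/t}·I_{b,tb}(X)^{1/t}, where μ = (1/2)(t+r−k)(t+r−k−1) and ν = (1/2)(t+r−k)(k+r−t−1). -/

import Mathlib

open Filter MeasureTheory Finset

attribute [local instance] Classical.propDecidable

noncomputable section

/-- Number of integral solutions of the Vinogradov system of degree k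
in 2s variables from [1,X]. -/
def Jcount (s k : ℕ) (X : ℝ) : ℕ :=
  Set.ncard {xy : (Fin s → ℤ) × (Fin s → ℤ) |
    (∀ i, 1 ≤ xy.1 i ∧ (xy.1 i : ℝ) ≤ X) ∧
    (∀ i, 1 ≤ xy.2 i ∧ (xy.2 i : ℝ) ≤ X) ∧
    ∀ j ∈ Finset.Icc 1 k, ∑ i, ((xy.1 i) ^ j - (xy.2 i) ^ j) = 0}

/-- e(z) = exp(2πiz). -/
def ec (z : ℝ) : ℂ := Complex.exp (2 * Real.pi * Complex.I * z)

/-- The unit box [0,1)^k. -/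
def box (k : ℕ) : Set (Fin k → ℝ) := Set.univ.pi fun _ => Set.Ico (0:ℝ) 1

/-- The exponential sum f_c(α;ξ), over 1 ≤ x ≤ X with x ≡ ξ (mod p^c). -/
def fexp (k p : ℕ) (X : ℝ) (c : ℕ) (ξ : ℤ) (α : Fin k → ℝ) : ℂ :=
  ∑ x ∈ (Finset.Icc (1:ℤ) ⌊X⌋).filter (fun x => Int.ModEq ((p:ℤ)^c) x ξ),
    ec (∑ j : Fin k, α j * (x:ℝ)^((j:ℕ)+1))

/-- The set Ξ_c^r(ξ): r-tuples in [1,p^{c+1}], congruent to ξ mod p^c,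
pairwise distinct mod p^{c+1}. -/
def XiSet (p r c : ℕ) (ξ : ℤ) : Set (Fin r → ℤ) :=
  {v | (∀ i, 1 ≤ v i ∧ v i ≤ (p:ℤ)^(c+1)) ∧
       (∀ i, Int.ModEq ((p:ℤ)^c) (v i) ξ) ∧
       Function.Injective fun i => ((v i : ZMod (p^(c+1))))}

/-- The conditioned exponential sum F_c(α;ξ). -/
def Fexp (k p r : ℕ) (X : ℝ) (c : ℕ) (ξ : ℤ) (α : Fin k → ℝ) : ℂ :=
  ∑ᶠ v ∈ XiSet p r c ξ, ∏ i, fexp k p X (c+1) (v i) α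

/-- The mean value I_{a,b}(X;ξ,η). -/
def Iab (k p r s : ℕ) (X : ℝ) (a b : ℕ) (ξ η : ℤ) : ℝ :=
  ∫ α in box k, ‖Fexp k p r X a ξ α‖^2 * ‖fexp k p X b η α‖^(2*s)

/-- The mean value K_{a,b}(X;ξ,η). -/
def Kab (k p r t : ℕ) (X : ℝ) (a b : ℕ) (ξ η : ℤ) : ℝ :=
  ∫ α in box k, ‖Fexp k p r X a ξ α‖^2 * ‖Fexp k p r X b η α‖^(2*t)

/-- I_{a,b}(X): the maximum of I_{a,b}(X;ξ,η) over admissible ξ, η. -/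
def Imax (k p r s : ℕ) (X : ℝ) (a b : ℕ) : ℝ :=
  sSup {v : ℝ | ∃ ξ η : ℤ, 1 ≤ ξ ∧ ξ ≤ (p:ℤ)^a ∧ 1 ≤ η ∧ η ≤ (p:ℤ)^b ∧
    ¬ Int.ModEq (p:ℤ) η ξ ∧ v = Iab k p r s X a b ξ η}

/-- The set Ξ(η) of members of Ξ_0^r(0) avoiding the class of η mod p. -/
def XiTilde (p r : ℕ) (η : ℤ) : Set (Fin r → ℤ) :=
  {v | v ∈ XiSet p r 0 0 ∧ ∀ i, ¬ Int.ModEq (p:ℤ) (v i) η}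

/-- The pre-conditioned sum F(α;η). -/
def Ftilde (k p r : ℕ) (X : ℝ) (η : ℤ) (α : Fin k → ℝ) : ℂ :=
  ∑ᶠ v ∈ XiTilde p r η, ∏ i, fexp k p X 1 (v i) α

/-- The mean value K̃_c(X;η). -/
def Ktilde (k p r t : ℕ) (X : ℝ) (c : ℕ) (η : ℤ) : ℝ :=
  ∫ α in box k, ‖Ftilde k p r X η α‖^2 * ‖Fexp k p r X c η α‖^(2*t)

/-- K_{a,b}(X): for a ≥ 1 the maximum of K_{a,b}(X;ξ,η) over admissible ξ, η;
for a = 0 the pre-congruencing quantity K_{0,b}(X) = max_η K̃_b(X;η). -/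
def Kmax (k p r t : ℕ) (X : ℝ) (a b : ℕ) : ℝ :=
  if a = 0 then sSup {v : ℝ | ∃ η : ℤ, 1 ≤ η ∧ η ≤ (p:ℤ)^b ∧ v = Ktilde k p r t X b η}
  else sSup {v : ℝ | ∃ ξ η : ℤ, 1 ≤ ξ ∧ ξ ≤ (p:ℤ)^a ∧ 1 ≤ η ∧ η ≤ (p:ℤ)^b ∧
    ¬ Int.ModEq (p:ℤ) η ξ ∧ v = Kab k p r t X a b ξ η}

/-- λ = limsup_{Y→∞} log J_{sr,k}(Y)/log Y. -/
def lamExp (k sr : ℕ) : ℝ :=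
  Filter.limsup (fun Y : ℝ => Real.log ((Jcount sr k Y : ℝ)) / Real.log Y) Filter.atTop

/-- θ = (16t)^{-N-1}. -/
def thetaC (t N : ℕ) : ℝ := (16*(t:ℝ)) ^ (-((N:ℝ)+1))

/-- δ = θ/(1000 N t^N). -/
def deltaC (t N : ℕ) : ℝ := thetaC t N / (1000 * (N:ℝ) * (t:ℝ)^N)

/-- M = X^θ. -/
def Mval (t N : ℕ) (X : ℝ) : ℝ := X ^ thetaC t N

/-- κ = r(t+1) - (1/2)(t+r-k)(t+r-k-1+(2r-2)/(t-1)). -/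
def kappa (k r t : ℕ) : ℝ :=
  (r : ℝ) * ((t : ℝ) + 1) -
    (1/2) * ((t : ℝ) + r - k) * ((t : ℝ) + r - k - 1 + (2*(r:ℝ) - 2)/((t:ℝ) - 1))

/-- Λ = λ - 2(s+r) + κ, with s = rt. -/
def LamC (k r t : ℕ) : ℝ := lamExp k (r*(t+1)) - 2*((r*(t+1) : ℕ) : ℝ) + kappa k r t

/-- The normalised mean value ⟦K_{a,b}(X)⟧ = K_{a,b}(X) (X/M^b)^{-2s} (X/M^a)^{κ-2r}. -/
def normK (k p r t N : ℕ) (X : ℝ) (a b : ℕ) : ℝ :=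
  Kmax k p r t X a b * (X / (Mval t N X)^b) ^ (-(2*((r*t : ℕ):ℝ))) *
    (X / (Mval t N X)^a) ^ (kappa k r t - 2*(r:ℝ))

/-- μ = (1/2)(t+r-k)(t+r-k-1). -/
def muC (k r t : ℕ) : ℝ := (1/2) * ((t:ℝ)+r-k) * ((t:ℝ)+r-k-1)

/-- ν = (1/2)(t+r-k)(k+r-t-1). -/
def nuC (k r t : ℕ) : ℝ := (1/2) * ((t:ℝ)+r-k) * ((k:ℝ)+r-t-1)

/-- Over a field in which `1, …, r` are invertible, the power sums of degrees `1, …, r` determine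
the set of entries of an `r`-tuple. -/
theorem exists_eq_of_sum_pow_eq {F : Type*} [Field F] {r : ℕ}
    (hF : ∀ n : ℕ, 1 ≤ n → n ≤ r → (n : F) ≠ 0) (u v : Fin r → F)
    (huv : ∀ n : ℕ, 1 ≤ n → n ≤ r → ∑ i, u i ^ n = ∑ i, v i ^ n) (i : Fin r) :
    ∃ j, v i = u j := by
  have hesymm : ∀ n : ℕ, n ≤ r →
      MvPolynomial.aeval u (MvPolynomial.esymm (Fin r) F n) =
        MvPolynomial.aeval v (MvPolynomial.esymm (Fin r) F n) := by
    intro n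
    induction n using Nat.strong_induction_on with
    | _ n ih =>
      intro hn
      rcases Nat.eq_zero_or_pos n with rfl | hpos
      · simp
      have hu := congrArg (MvPolynomial.aeval u) (MvPolynomial.mul_esymm_eq_sum (Fin r) F n)
      have hv := congrArg (MvPolynomial.aeval v) (MvPolynomial.mul_esymm_eq_sum (Fin r) F n)
      simp only [map_mul, map_natCast, map_pow, map_neg, map_one, map_sum] at hu hv
      apply mul_left_cancel₀ (hF n hpos hn)
      rw [hu, hv]
      congr 1
      refine Finset.sum_congr rfl fun x hx => ?_
      rw [Finset.mem_filter] at hx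
      have hx1 := Finset.HasAntidiagonal.mem_antidiagonal.1 hx.1
      rw [ih x.1 hx.2 (by omega)]
      congr 1
      simpa [MvPolynomial.psum] using huv x.2 (by omega) (by omega)
  have hprod : ∏ i, (Polynomial.X - Polynomial.C (u i)) =
      ∏ i, (Polynomial.X - Polynomial.C (v i)) := by
    have hexp : ∀ w : Fin r → F, ∏ i, (Polynomial.X - Polynomial.C (w i)) =
        ∑ j ∈ Finset.range (r + 1), (-1) ^ j *
          (Polynomial.C (MvPolynomial.aeval w (MvPolynomial.esymm (Fin r) F j)) *
            Polynomial.X ^ (r - j)) := by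
      intro w
      have := Multiset.prod_X_sub_X_eq_sum_esymm ((Finset.univ : Finset (Fin r)).val.map w)
      simpa [MvPolynomial.aeval_esymm_eq_multiset_esymm, Finset.prod, Function.comp_def] using this
    rw [hexp, hexp]
    refine Finset.sum_congr rfl fun j hj => ?_
    rw [hesymm j (by simpa [Nat.lt_succ_iff] using hj)]
  have heval := congrArg (Polynomial.eval (v i)) hprod
  rw [Polynomial.eval_prod, Polynomial.eval_prod,
    Finset.prod_eq_zero (f := fun j => Polynomial.eval (v i) (Polynomial.X - Polynomial.C (v j)))
      (Finset.mem_univ i) (by simp), Finset.prod_eq_zero_iff] at heval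
  obtain ⟨j, -, hj⟩ := heval
  exact ⟨j, by simpa [sub_eq_zero] using hj⟩

/-- Uniqueness in Hensel's lemma for diagonal systems of polynomial congruences. -/
theorem pow_dvd_sub_of_pow_dvd_sum_eval_sub {p : ℕ} [Fact p.Prime] {r : ℕ}
    (ψ : Fin r → Polynomial ℤ) (y z : Fin r → ℤ) (E : ℕ)
    (hnd : ∀ d : Fin r → ZMod p,
      (∀ h, ∑ i, (((ψ h).derivative.eval (y i) : ℤ) : ZMod p) * d i = 0) → d = 0)
    (hbase : ∀ i, (p : ℤ) ∣ z i - y i)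
    (hE : ∀ h, (p : ℤ) ^ E ∣ ∑ i, ((ψ h).eval (z i) - (ψ h).eval (y i))) (i : Fin r) :
    (p : ℤ) ^ E ∣ z i - y i := by
  have hp : (p : ℤ) ≠ 0 := by exact_mod_cast (Fact.out : p.Prime).ne_zero
  have key : ∀ l : ℕ, l + 1 ≤ E → ∀ i, (p : ℤ) ^ (l + 1) ∣ z i - y i := by
    intro l
    induction l with
    | zero => intro _ i; simpa using hbase i
    | succ l ih =>
      intro hl
      choose d hd using ih (by omega)
      have hz : ∀ i, z i = y i + (p : ℤ) ^ (l + 1) * d i := fun i => by rw [← hd]; ring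
      have hd0 : (fun i => ((d i : ℤ) : ZMod p)) = 0 := by
        apply hnd
        intro h
        have hdvd : (p : ℤ) ^ (l + 1) * p ∣
            ∑ i, ((ψ h).eval (z i) - (ψ h).eval (y i)) := by
          rw [← pow_succ]
          exact (pow_dvd_pow _ hl).trans (hE h)
        have hsum : ∃ K : ℤ, ∑ i, ((ψ h).eval (z i) - (ψ h).eval (y i)) =
            (p : ℤ) ^ (l + 1) * (∑ i, (ψ h).derivative.eval (y i) * d i + p * K) := by
          refine ⟨∑ i, ((ψ h).binomExpansion (y i) ((p : ℤ) ^ (l + 1) * d i)).1 *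
            p ^ l * d i ^ 2, ?_⟩
          rw [Finset.mul_sum, ← Finset.sum_add_distrib, Finset.mul_sum]
          refine Finset.sum_congr rfl fun i _ => ?_
          have hexp := ((ψ h).binomExpansion (y i) ((p : ℤ) ^ (l + 1) * d i)).2
          have hzi := congrArg (fun w => (ψ h).eval w) (hz i)
          linear_combination hzi + hexp
        obtain ⟨K, hK⟩ := hsum
        rw [hK] at hdvd
        have h2 := Int.dvd_of_mul_dvd_mul_left (pow_ne_zero _ hp) hdvd
        have h3 : (p : ℤ) ∣ ∑ i, (ψ h).derivative.eval (y i) * d i :=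
          (Int.dvd_add_left (dvd_mul_right _ _)).1 h2
        have h4 := (ZMod.intCast_zmod_eq_zero_iff_dvd _ p).2 h3
        push_cast at h4
        exact h4
      intro i
      have hdi : (p : ℤ) ∣ d i := (ZMod.intCast_zmod_eq_zero_iff_dvd _ p).1 (congrFun hd0 i)
      rw [hd i, pow_succ]
      exact mul_dvd_mul_left _ hdi
  rcases E with _ | E
  · simp
  · exact key E le_rfl i

/-- A combination of the powers `x ^ j` with `j₀ < j ≤ j₀ + n` whose Taylor expansion at `ω` has
a single nonzero coefficient in degrees `1, …, n`. -/
theorem exists_polynomial_taylor_single (j₀ n h : ℕ) (h1 : 1 ≤ h) (hn : h ≤ n) (ω : ℤ) :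
    ∃ (Q : Polynomial ℤ) (c Δ : ℤ) (R : Polynomial ℤ), (∀ j ≤ j₀, Q.coeff j = 0) ∧
      Q.natDegree ≤ j₀ + n ∧ h * Δ = (j₀ + n).factorial * ω ^ (j₀ + n) ∧
      Q.comp (Polynomial.X + Polynomial.C ω) =
        Polynomial.C c + Polynomial.C Δ * Polynomial.X ^ h + Polynomial.X ^ (n + 1) * R := by
  obtain ⟨U, V, hUV⟩ : ∃ U V : Polynomial ℤ,
      U * (Polynomial.X + Polynomial.C ω) ^ j₀ + V * Polynomial.X ^ n =
        Polynomial.C (ω ^ (j₀ + n)) := by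
    have hmem : ((Polynomial.X + Polynomial.C ω) + -Polynomial.X : Polynomial ℤ) ^ (j₀ + n) ∈
        Ideal.span {(Polynomial.X + Polynomial.C ω : Polynomial ℤ) ^ j₀, Polynomial.X ^ n} := by
      apply Ideal.add_pow_mem_of_pow_mem_of_le (m := j₀) (n := n)
      · exact Ideal.subset_span (by simp)
      · rw [neg_pow]
        exact Ideal.mul_mem_left _ _ (Ideal.subset_span (by simp))
      · omega
    obtain ⟨U, V, hUV⟩ := Ideal.mem_span_pair.1 hmem
    refine ⟨U, V, hUV.trans ?_⟩
    rw [Polynomial.C_pow]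
    ring
  set A : Polynomial ℤ := Polynomial.X + Polynomial.C ω with hA
  set G : Polynomial ℤ := (Polynomial.X ^ (h - 1) * U) %ₘ (Polynomial.X ^ n) with hG
  set W : Polynomial ℤ := (Polynomial.X ^ (h - 1) * U) /ₘ (Polynomial.X ^ n) with hW
  have hmon : (Polynomial.X ^ n : Polynomial ℤ).Monic := Polynomial.monic_X_pow n
  have hGW : G + Polynomial.X ^ n * W = Polynomial.X ^ (h - 1) * U :=
    Polynomial.modByMonic_add_div _ _
  have hGdeg : G.natDegree < n := by
    have := Polynomial.natDegree_modByMonic_lt (Polynomial.X ^ (h - 1) * U) hmon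
      (by intro hh; have := congrArg Polynomial.natDegree hh; simp at this; omega)
    simpa using this
  set q : Polynomial ℤ := Polynomial.X ^ j₀ * G.comp (Polynomial.X - Polynomial.C ω) with hq
  have hqdeg : q.natDegree < j₀ + n := by
    refine lt_of_le_of_lt Polynomial.natDegree_mul_le ?_
    rw [Polynomial.natDegree_comp, Polynomial.natDegree_X_sub_C, Polynomial.natDegree_X_pow]
    omega
  have hqA : q.comp A = Polynomial.X ^ (h - 1) * Polynomial.C (ω ^ (j₀ + n)) -
      Polynomial.X ^ n * (Polynomial.X ^ (h - 1) * V + A ^ j₀ * W) := by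
    have : (G.comp (Polynomial.X - Polynomial.C ω)).comp A = G := by
      rw [Polynomial.comp_assoc]; simp [hA]
    rw [hq, Polynomial.mul_comp, this, Polynomial.pow_comp, Polynomial.X_comp, ← hUV]
    linear_combination (A ^ j₀) * hGW
  set f : ℕ → ℤ := fun i => q.coeff i * ((j₀ + n).factorial / (i + 1) : ℕ) with hf
  set Q : Polynomial ℤ := ∑ i ∈ Finset.range (j₀ + n), Polynomial.monomial (i + 1) (f i) with hQ
  have hQc : ∀ i, Q.coeff (i + 1) = if i < j₀ + n then f i else 0 := by
    intro i
    simp [hQ, Polynomial.coeff_monomial]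
  have hQ0 : Q.coeff 0 = 0 := by
    simp [hQ, Polynomial.coeff_monomial]
  have hQder : Polynomial.derivative Q = Polynomial.C ((j₀ + n).factorial : ℤ) * q := by
    ext i
    rw [Polynomial.coeff_derivative, hQc, Polynomial.coeff_C_mul]
    split_ifs with hi
    · have : (((j₀ + n).factorial / (i + 1) : ℕ) : ℤ) * (i + 1) = (j₀ + n).factorial := by
        exact_mod_cast Nat.div_mul_cancel (Nat.dvd_factorial (Nat.succ_pos i) hi)
      rw [hf]
      simp only
      rw [mul_assoc, this, mul_comm]
    · rw [Polynomial.coeff_eq_zero_of_natDegree_lt (by omega)]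
      simp
  set T := Q.comp A with hT
  have hTder : Polynomial.derivative T = Polynomial.C ((j₀ + n).factorial : ℤ) *
      (Polynomial.X ^ (h - 1) * Polynomial.C (ω ^ (j₀ + n)) -
      Polynomial.X ^ n * (Polynomial.X ^ (h - 1) * V + A ^ j₀ * W)) := by
    rw [hT, Polynomial.derivative_comp, hQder, Polynomial.mul_comp, hqA]
    simp [hA]
  have hTc : ∀ l < n, T.coeff (l + 1) * (l + 1) =
      if l = h - 1 then ((j₀ + n).factorial : ℤ) * ω ^ (j₀ + n) else 0 := by
    intro l hl
    rw [← Polynomial.coeff_derivative, hTder, Polynomial.coeff_C_mul, Polynomial.coeff_sub,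
      Polynomial.coeff_mul_C, Polynomial.coeff_X_pow,
      Polynomial.coeff_X_pow_mul' (Polynomial.X ^ (h - 1) * V + A ^ j₀ * W),
      if_neg (not_le.2 hl)]
    split_ifs <;> simp
  refine ⟨Q, T.coeff 0, T.coeff h, ?_⟩
  have hdvd : Polynomial.X ^ (n + 1) ∣
      T - (Polynomial.C (T.coeff 0) + Polynomial.C (T.coeff h) * Polynomial.X ^ h) := by
    rw [Polynomial.X_pow_dvd_iff]
    intro d hd
    rcases d with _ | l
    · have : 0 ≠ h := by omega
      simp [Polynomial.coeff_X_pow, this]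
    · simp only [Polynomial.coeff_sub, Polynomial.coeff_add, Polynomial.coeff_C_mul,
        Polynomial.coeff_X_pow, Polynomial.coeff_C_succ]
      by_cases hlh : l + 1 = h
      · simp [hlh]
      · have := hTc l (by omega)
        rw [if_neg (by omega)] at this
        have h0 : T.coeff (l + 1) = 0 := by
          rcases mul_eq_zero.1 this with h0 | h0
          · exact h0
          · omega
        simp [h0, hlh]
  obtain ⟨R, hR⟩ := hdvd
  refine ⟨R, ?_, ?_, ?_, ?_⟩
  · intro j hj
    rcases j with _ | i
    · exact hQ0
    · rw [hQc]
      split_ifs with hi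
      · have : q.coeff i = 0 := by
          rw [hq, Polynomial.coeff_X_pow_mul', if_neg (by omega)]
        simp [hf, this]
      · rfl
  · refine Polynomial.natDegree_sum_le_of_forall_le _ _ fun i hi => ?_
    refine (Polynomial.natDegree_monomial_le _).trans ?_
    have := Finset.mem_range.1 hi
    omega
  · have := hTc (h - 1) (by omega)
    rw [if_pos rfl] at this
    have hh : h - 1 + 1 = h := by omega
    rw [hh] at this
    have hc : ((h - 1 : ℕ) : ℤ) + 1 = h := by omega
    rw [hc] at this
    rw [mul_comm]
    exact this
  · linear_combination hR

/-- Modulo a large prime, a suitable combination of the powers `(ω + p ^ a * y) ^ j` with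
`j₀ < j ≤ j₀ + n` behaves like `p ^ (h * a) * y ^ h`. -/
theorem exists_combination_eq_pow_mul_eval {p : ℕ} (hp : p.Prime) {j₀ n h a : ℕ} (hpn : j₀ + n < p)
    (h1 : 1 ≤ h) (hn : h ≤ n) (ha : 1 ≤ a) {ω : ℤ} (hω : ¬ (p : ℤ) ∣ ω) :
    ∃ (q : ℕ → ℤ) (c Δ : ℤ) (R : Polynomial ℤ), ¬ (p : ℤ) ∣ Δ ∧ ∀ y : ℤ,
      ∑ j ∈ Finset.Ioc j₀ (j₀ + n), q j * (ω + (p : ℤ) ^ a * y) ^ j =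
        c + (p : ℤ) ^ (h * a) *
          (Polynomial.C Δ * Polynomial.X ^ h + Polynomial.C (p : ℤ) * R).eval y := by
  obtain ⟨Q, c, Δ, R, hQ0, hQd, hΔ, hQ⟩ := exists_polynomial_taylor_single j₀ n h h1 hn ω
  have hpZ := Nat.prime_iff_prime_int.1 hp
  refine ⟨Q.coeff, c, Δ, Polynomial.C ((p : ℤ) ^ ((n + 1 - h) * a - 1)) * Polynomial.X ^ (n + 1) *
    R.comp (Polynomial.C ((p : ℤ) ^ a) * Polynomial.X), ?_, ?_⟩
  · intro hdvd
    have : (p : ℤ) ∣ (j₀ + n).factorial * ω ^ (j₀ + n) := hΔ ▸ hdvd.mul_left _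
    rcases hpZ.dvd_or_dvd this with h2 | h2
    · have := (hp.dvd_factorial).1 (Int.natCast_dvd_natCast.1 h2)
      omega
    · exact hω (hpZ.dvd_of_dvd_pow h2)
  · intro y
    have hev := congrArg (Polynomial.eval ((p : ℤ) ^ a * y)) hQ
    have hsum : Q.eval (ω + (p : ℤ) ^ a * y) =
        ∑ j ∈ Finset.Ioc j₀ (j₀ + n), Q.coeff j * (ω + (p : ℤ) ^ a * y) ^ j := by
      rw [Polynomial.eval_eq_sum_range' (Nat.lt_succ_of_le hQd)]
      symm
      apply Finset.sum_subset
      · intro j hj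
        simp at hj ⊢
        omega
      · intro j hj hj'
        rw [hQ0 j (by simp at hj hj'; omega), zero_mul]
    rw [← hsum]
    have hexp : (n + 1) * a = h * a + 1 + ((n + 1 - h) * a - 1) := by
      obtain ⟨m, hm⟩ : ∃ m, n + 1 = h + (m + 1) := ⟨n - h, by omega⟩
      have : n + 1 - h = m + 1 := by omega
      rw [this, hm, add_mul h, add_assoc]
      have : 1 ≤ (m + 1) * a := Nat.mul_pos (Nat.succ_pos m) ha
      omega
    have hpow : ((p : ℤ) ^ a * y) ^ (n + 1) =
        (p : ℤ) ^ (h * a) * p * p ^ ((n + 1 - h) * a - 1) * y ^ (n + 1) := by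
      rw [mul_pow, ← pow_mul, mul_comm a, hexp, pow_add, pow_add, pow_one]
    simp only [Polynomial.eval_comp, Polynomial.eval_add, Polynomial.eval_mul, Polynomial.eval_pow,
      Polynomial.eval_X, Polynomial.eval_C] at hev ⊢
    rw [add_comm ω, hev, hpow, mul_pow, ← pow_mul, mul_comm a h]
    ring

theorem card_image_le_mul_of_fibers {ι γ δ : Type*} [DecidableEq γ] [DecidableEq δ]
    (S : Finset ι) (f : ι → γ) (g : ι → δ)
    {D E : ℕ} (hg : #(S.image g) ≤ D)
    (hf : ∀ T ⊆ S, (∀ x ∈ T, ∀ y ∈ T, g x = g y) → #(T.image f) ≤ E) :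
    #(S.image f) ≤ D * E := by
  have hsub : S.image f ⊆ (S.image g).biUnion fun d => (S.filter fun x => g x = d).image f := by
    intro c hc
    obtain ⟨x, hx, rfl⟩ := Finset.mem_image.1 hc
    exact Finset.mem_biUnion.2 ⟨g x, Finset.mem_image_of_mem _ hx,
      Finset.mem_image_of_mem _ (Finset.mem_filter.2 ⟨hx, rfl⟩)⟩
  refine (Finset.card_le_card hsub).trans ?_
  refine (Finset.card_biUnion_le_card_mul _ _ E fun d _ => hf _ (Finset.filter_subset _ _) ?_).trans
    (Nat.mul_le_mul_right _ hg)
  intro x hx y hy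
  rw [(Finset.mem_filter.1 hx).2, (Finset.mem_filter.1 hy).2]

theorem card_image_emod_pow_le {ι : Type*} (S : Finset ι) {p : ℕ} (hp : 0 < p) (f : ι → ℤ)
    (u U : ℕ) (hf : ∀ x ∈ S, ∀ y ∈ S, (p : ℤ) ^ u ∣ f x - f y) :
    #(S.image fun x => f x % (p : ℤ) ^ U) ≤ p ^ (U - u) := by
  have hpZ : (0 : ℤ) < p := by exact_mod_cast hp
  rcases le_total U u with hUu | hUu
  · rw [Nat.sub_eq_zero_of_le hUu, pow_zero, Finset.card_le_one]
    simp only [Finset.mem_image, forall_exists_index, and_imp, forall_apply_eq_imp_iff₂]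
    intro x hx y hy
    exact Int.emod_eq_emod_iff_emod_sub_eq_zero.2
      (Int.emod_eq_zero_of_dvd ((pow_dvd_pow _ hUu).trans (hf x hx y hy)))
  · have hcard : #(Finset.Ico (0 : ℤ) ((p : ℤ) ^ (U - u))) = p ^ (U - u) := by
      rw [Int.card_Ico, sub_zero, ← Nat.cast_pow, Int.toNat_natCast]
    rw [← hcard]
    apply Finset.card_le_card_of_injOn (fun v => v / (p : ℤ) ^ u)
    · intro v hv
      simp only [Finset.coe_image, Set.mem_image, Finset.mem_coe] at hv
      obtain ⟨x, -, rfl⟩ := hv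
      simp only [Finset.coe_Ico, Set.mem_Ico]
      refine ⟨Int.ediv_nonneg (Int.emod_nonneg _ (by positivity)) (by positivity), ?_⟩
      apply Int.ediv_lt_of_lt_mul (by positivity)
      rw [← pow_add, Nat.sub_add_cancel hUu]
      exact Int.emod_lt_of_pos _ (by positivity)
    · intro v hv w hw hvw
      simp only [Finset.coe_image, Set.mem_image, Finset.mem_coe] at hv hw
      obtain ⟨x, hx, rfl⟩ := hv
      obtain ⟨y, hy, rfl⟩ := hw
      have h1 : f x % (p : ℤ) ^ U % (p : ℤ) ^ u = f y % (p : ℤ) ^ U % (p : ℤ) ^ u := by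
        rw [Int.emod_emod_of_dvd _ (pow_dvd_pow _ hUu), Int.emod_emod_of_dvd _ (pow_dvd_pow _ hUu)]
        exact Int.emod_eq_emod_iff_emod_sub_eq_zero.2 (Int.emod_eq_zero_of_dvd (hf x hx y hy))
      simp only at hvw ⊢
      rw [← Int.mul_ediv_add_emod (f x % (p : ℤ) ^ U) ((p : ℤ) ^ u), hvw, h1,
        Int.mul_ediv_add_emod]

theorem card_image_pi_emod_pow_le {ι J : Type*} [Fintype J] (S : Finset ι) {p : ℕ} (hp : 0 < p)
    (f : J → ι → ℤ) (u U : J → ℕ)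
    (hf : ∀ j, ∀ x ∈ S, ∀ y ∈ S, (p : ℤ) ^ u j ∣ f j x - f j y) :
    #(S.image fun x j => f j x % (p : ℤ) ^ U j) ≤ p ^ ∑ j, (U j - u j) := by
  have hsub : (S.image fun x j => f j x % (p : ℤ) ^ U j) ⊆
      Fintype.piFinset fun j => S.image fun x => f j x % (p : ℤ) ^ U j := by
    intro c hc
    obtain ⟨x, hx, rfl⟩ := Finset.mem_image.1 hc
    exact Fintype.mem_piFinset.2 fun j => Finset.mem_image.2 ⟨x, hx, rfl⟩
  refine (Finset.card_le_card hsub).trans ?_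
  rw [Fintype.card_piFinset, ← Finset.prod_pow_eq_pow_sum]
  exact Finset.prod_le_prod' fun j _ => card_image_emod_pow_le S hp (f j) _ _ (hf j)

/-- A nonsingular diagonal system of congruences whose solutions share their power sums modulo `p`
has at most `r ^ r` solutions. -/
theorem card_image_le_of_sum_eval_dvd {ι γ : Type*} [DecidableEq γ] {p r : ℕ}
    (hp : p.Prime) (hrp : r < p) (T : Finset ι) (f : ι → γ) (y : ι → Fin r → ℤ) (ψ : Fin r → Polynomial ℤ) (E : ℕ)
    (hpow : ∀ x ∈ T, ∀ x' ∈ T, ∀ n, 1 ≤ n → n ≤ r → (p : ℤ) ∣ ∑ i, (y x i ^ n - y x' i ^ n))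
    (hnd : ∀ x ∈ T, ∀ d : Fin r → ZMod p,
      (∀ h, ∑ i, (((ψ h).derivative.eval (y x i) : ℤ) : ZMod p) * d i = 0) → d = 0)
    (hE : ∀ x ∈ T, ∀ x' ∈ T, ∀ h,
      (p : ℤ) ^ E ∣ ∑ i, ((ψ h).eval (y x i) - (ψ h).eval (y x' i)))
    (hf : ∀ x ∈ T, ∀ x' ∈ T, (∀ i, (p : ℤ) ^ E ∣ y x i - y x' i) → f x = f x') :
    #(T.image f) ≤ r ^ r := by
  have : Fact p.Prime := ⟨hp⟩
  rcases T.eq_empty_or_nonempty with rfl | ⟨x₀, hx₀⟩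
  · simp
  have key := card_image_le_mul_of_fibers T f (fun x i => ((y x i : ℤ) : ZMod p))
    (D := r ^ r) (E := 1) ?_ ?_
  · simpa using key
  · have hsub : (T.image fun x i => ((y x i : ℤ) : ZMod p)) ⊆
        Fintype.piFinset fun _ : Fin r =>
          Finset.univ.image fun j : Fin r => ((y x₀ j : ℤ) : ZMod p) := by
      intro c hc
      obtain ⟨x, hx, rfl⟩ := Finset.mem_image.1 hc
      refine Fintype.mem_piFinset.2 fun i => ?_
      suffices ∃ j, ((y x i : ℤ) : ZMod p) = ((y x₀ j : ℤ) : ZMod p) by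
        obtain ⟨j, hj⟩ := this
        exact Finset.mem_image.2 ⟨j, Finset.mem_univ _, hj.symm⟩
      refine exists_eq_of_sum_pow_eq (F := ZMod p) (r := r) ?_
        (fun j => ((y x₀ j : ℤ) : ZMod p)) (fun j => ((y x j : ℤ) : ZMod p)) ?_ i
      · intro n hn1 hnr h0
        have := Nat.le_of_dvd hn1 ((ZMod.natCast_eq_zero_iff n p).1 h0)
        omega
      · intro n hn1 hnr
        have := (ZMod.intCast_zmod_eq_zero_iff_dvd _ p).2 (hpow x₀ hx₀ x hx n hn1 hnr)
        push_cast at this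
        rw [Finset.sum_sub_distrib, sub_eq_zero] at this
        exact this
    refine (Finset.card_le_card hsub).trans ?_
    rw [Fintype.card_piFinset, Finset.prod_const, Finset.card_univ, Fintype.card_fin]
    exact Nat.pow_le_pow_left (Finset.card_image_le.trans (by simp)) _
  · intro U hU hconst
    rw [Finset.card_le_one]
    simp only [Finset.mem_image, forall_exists_index, and_imp, forall_apply_eq_imp_iff₂]
    intro x hx x' hx'
    refine hf x (hU hx) x' (hU hx') ?_
    refine pow_dvd_sub_of_pow_dvd_sum_eval_sub ψ (y x') (y x) E (hnd x' (hU hx')) ?_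
      (hE x (hU hx) x' (hU hx'))
    intro i
    have := congrFun (hconst x hx x' hx') i
    rw [← sub_eq_zero, ← Int.cast_sub] at this
    exact (ZMod.intCast_zmod_eq_zero_iff_dvd _ p).1 this

/-- Weighted columns of a Vandermonde matrix with distinct nodes are linearly independent. -/
theorem eq_zero_of_sum_weighted_pow_eq_zero {F : Type*} [Field F] {r : ℕ} {v w : Fin r → F}
    (hv : Function.Injective v) (hw : ∀ i, w i ≠ 0) {c : Fin r → F} (hc : ∀ h, c h ≠ 0)
    (d : Fin r → F) (hd : ∀ h : Fin r, ∑ i, c h * (w i * v i ^ (h : ℕ)) * d i = 0) : d = 0 := by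
  have := Matrix.eq_zero_of_forall_pow_sum_mul_pow_eq_zero (v := fun i => d i * w i) hv
    (fun h => by
      have h1 := hd h
      have h2 : c h * ∑ i, d i * w i * v i ^ (h : ℕ) = 0 := by
        rw [← h1, Finset.mul_sum]
        exact Finset.sum_congr rfl fun i _ => by ring
      exact (mul_eq_zero.1 h2).resolve_left (hc h))
  funext i
  have hi := congrFun this i
  exact (mul_eq_zero.1 hi).resolve_right (hw i)

theorem emod_eq_emod_of_dvd_sub {m x y : ℤ} (h : m ∣ x - y) : x % m = y % m :=
  Int.emod_eq_emod_iff_emod_sub_eq_zero.2 (Int.emod_eq_zero_of_dvd h)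

theorem dvd_sub_of_emod_eq_emod {m x y : ℤ} (h : x % m = y % m) : m ∣ x - y :=
  Int.dvd_of_emod_eq_zero (Int.emod_eq_emod_iff_emod_sub_eq_zero.1 h)

theorem card_residues_le_of_not_dvd {p k r E : ℕ} (hp : p.Prime) (hpk : k < p) (hrk : r ≤ k)
    (η : ℤ) (T : Finset (Fin r → ℤ))
    (hinj : ∀ x ∈ T, ∀ i j, (p : ℤ) ∣ x i - x j → i = j)
    (hη : ∀ x ∈ T, ∀ i, ¬ (p : ℤ) ∣ x i - η)
    (hlow : ∀ x ∈ T, ∀ y ∈ T, ∀ j, 1 ≤ j → j ≤ k →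
      (p : ℤ) ∣ ∑ i, ((x i - η) ^ j - (y i - η) ^ j))
    (hhigh : ∀ x ∈ T, ∀ y ∈ T, ∀ j, k - r < j → j ≤ k →
      (p : ℤ) ^ E ∣ ∑ i, ((x i - η) ^ j - (y i - η) ^ j)) :
    #(T.image fun x i => x i % (p : ℤ) ^ E) ≤ r ^ r := by
  have : Fact p.Prime := ⟨hp⟩
  refine card_image_le_of_sum_eval_dvd hp (by omega) T _ (fun x i => x i - η)
    (fun h => Polynomial.X ^ (k - r + 1 + (h : ℕ))) E ?_ ?_ ?_ ?_
  · intro x hx y hy n hn1 hn2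
    exact hlow x hx y hy n hn1 (by omega)
  · intro x hx d hd
    refine eq_zero_of_sum_weighted_pow_eq_zero (v := fun i => ((x i - η : ℤ) : ZMod p))
      (w := fun i => ((x i - η : ℤ) : ZMod p) ^ (k - r))
      (c := fun h => ((k - r + 1 + (h : ℕ) : ℕ) : ZMod p)) ?_ ?_ ?_ d ?_
    · intro i j hij
      apply hinj x hx
      simp only at hij
      rw [← sub_eq_zero, ← Int.cast_sub, ZMod.intCast_zmod_eq_zero_iff_dvd] at hij
      simpa using hij
    · intro i
      apply pow_ne_zero
      rw [Ne, ZMod.intCast_zmod_eq_zero_iff_dvd]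
      exact hη x hx i
    · intro h h0
      have := Nat.le_of_dvd (by omega) ((ZMod.natCast_eq_zero_iff _ p).1 h0)
      omega
    · intro h
      rw [← hd h]
      refine Finset.sum_congr rfl fun i _ => ?_
      have he : k - r + 1 + (h : ℕ) - 1 = k - r + h := by omega
      simp only [Polynomial.derivative_X_pow, Polynomial.eval_mul, Polynomial.eval_pow,
        Polynomial.eval_X, he, Polynomial.eval_C]
      push_cast
      ring
  · intro x hx y hy h
    simpa using hhigh x hx y hy (k - r + 1 + (h : ℕ)) (by omega) (by omega)
  · intro x _ y _ hxy
    funext i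
    apply emod_eq_emod_of_dvd_sub
    simpa using hxy i

theorem card_residues_le_of_modEq {p k r t a b : ℕ} (hp : p.Prime) (hpk : k < p) (hrk : r ≤ k)
    (ht : 1 ≤ t) (htk : t ≤ k) (ha : 1 ≤ a) (hab : a < b)
    (hba : (k - t - 1) * a ≤ b) (ξ η : ℤ) (hξη : ¬ (p : ℤ) ∣ ξ - η) (T : Finset (Fin r → ℤ))
    (hξ : ∀ x ∈ T, ∀ i, (p : ℤ) ^ a ∣ x i - ξ)
    (hinj : ∀ x ∈ T, ∀ i j, (p : ℤ) ^ (a + 1) ∣ x i - x j → i = j)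
    (hlow : ∀ x ∈ T, ∀ y ∈ T, ∀ j, t < j → j ≤ k →
      (p : ℤ) ^ (j * b) ∣ ∑ i, ((x i - η) ^ j - (y i - η) ^ j))
    (hhigh : ∀ x ∈ T, ∀ y ∈ T, ∀ j, k - r < j → j ≤ k →
      (p : ℤ) ^ (t * b) ∣ ∑ i, ((x i - η) ^ j - (y i - η) ^ j)) :
    #(T.image fun x i => x i % (p : ℤ) ^ (t * b)) ≤
      p ^ (∑ h ∈ Finset.Ioc (k - t) r, (h - 1) * a) * r ^ r := by
  have : Fact p.Prime := ⟨hp⟩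
  have hp0 : (p : ℤ) ≠ 0 := by exact_mod_cast hp.ne_zero
  have hatb : a < t * b := lt_of_lt_of_le hab (Nat.le_mul_of_pos_left b ht)
  have hcomb : ∀ h : ℕ, ∃ (Δ : ℤ) (R : Polynomial ℤ), 1 ≤ h → h ≤ r → ¬ (p : ℤ) ∣ Δ ∧
      ∃ j₀ : ℕ, ∃ q : ℕ → ℤ, ∃ c : ℤ, (j₀ = if h ≤ k - t then t else k - r) ∧
      ∀ y : ℤ, ∑ j ∈ Finset.Ioc j₀ k, q j * (ξ - η + (p : ℤ) ^ a * y) ^ j =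
        c + (p : ℤ) ^ (h * a) *
          (Polynomial.C Δ * Polynomial.X ^ h + Polynomial.C (p : ℤ) * R).eval y := by
    intro h
    by_cases hh : 1 ≤ h ∧ h ≤ r
    · obtain ⟨h1, hr⟩ := hh
      by_cases hkt : h ≤ k - t
      · obtain ⟨q, c, Δ, R, hΔ, hy⟩ := exists_combination_eq_pow_mul_eval hp (j₀ := t)
          (n := k - t) (h := h) (a := a) (by omega) h1 hkt ha hξη
        rw [show t + (k - t) = k by omega] at hy
        exact ⟨Δ, R, fun _ _ => ⟨hΔ, t, q, c, by rw [if_pos hkt], hy⟩⟩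
      · obtain ⟨q, c, Δ, R, hΔ, hy⟩ := exists_combination_eq_pow_mul_eval hp (j₀ := k - r)
          (n := r) (h := h) (a := a) (by omega) h1 hr ha hξη
        rw [show k - r + r = k by omega] at hy
        exact ⟨Δ, R, fun _ _ => ⟨hΔ, k - r, q, c, by rw [if_neg hkt], hy⟩⟩
    · exact ⟨0, 0, fun h1 h2 => absurd ⟨h1, h2⟩ hh⟩
  choose Δ R hΔR using hcomb
  set ψ : ℕ → Polynomial ℤ := fun h =>
    Polynomial.C (Δ h) * Polynomial.X ^ h + Polynomial.C (p : ℤ) * R h with hψ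
  set y : (Fin r → ℤ) → Fin r → ℤ := fun x i => (x i - ξ) / (p : ℤ) ^ a with hy
  have hxy : ∀ x ∈ T, ∀ i, x i = ξ + (p : ℤ) ^ a * y x i := by
    intro x hx i
    rw [hy]
    simp only
    rw [Int.mul_ediv_cancel' (hξ x hx i)]
    ring
  have hsum : ∀ h, 1 ≤ h → h ≤ r → ∀ x ∈ T, ∀ x' ∈ T, ∀ E : ℕ,
      (∀ j, (if h ≤ k - t then t else k - r) < j → j ≤ k →
        (p : ℤ) ^ E ∣ ∑ i, ((x i - η) ^ j - (x' i - η) ^ j)) →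
      (p : ℤ) ^ (E - h * a) ∣ ∑ i, ((ψ h).eval (y x i) - (ψ h).eval (y x' i)) := by
    intro h h1 hr x hx x' hx' E hE
    obtain ⟨-, j₀, q, c, hj₀, hq⟩ := hΔR h h1 hr
    have hid : (p : ℤ) ^ (h * a) * ∑ i, ((ψ h).eval (y x i) - (ψ h).eval (y x' i)) =
        ∑ j ∈ Finset.Ioc j₀ k, q j * ∑ i, ((x i - η) ^ j - (x' i - η) ^ j) := by
      simp_rw [Finset.mul_sum]
      rw [Finset.sum_comm]
      refine Finset.sum_congr rfl fun i _ => ?_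
      have e1 := hq (y x i)
      have e2 := hq (y x' i)
      have f1 : ξ - η + (p : ℤ) ^ a * y x i = x i - η := by rw [hxy x hx i]; ring
      have f2 : ξ - η + (p : ℤ) ^ a * y x' i = x' i - η := by rw [hxy x' hx' i]; ring
      rw [f1] at e1
      rw [f2] at e2
      simp_rw [mul_sub]
      rw [Finset.sum_sub_distrib, e1, e2]
      ring
    have hdvd : (p : ℤ) ^ E ∣
        (p : ℤ) ^ (h * a) * ∑ i, ((ψ h).eval (y x i) - (ψ h).eval (y x' i)) := by
      rw [hid]
      refine Finset.dvd_sum fun j hj => Dvd.dvd.mul_left ?_ _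
      rw [Finset.mem_Ioc, hj₀] at hj
      exact hE j hj.1 hj.2
    rcases le_total E (h * a) with hle | hle
    · simp [Nat.sub_eq_zero_of_le hle]
    · rw [show E = h * a + (E - h * a) by omega, pow_add] at hdvd
      exact Int.dvd_of_mul_dvd_mul_left (pow_ne_zero _ hp0) hdvd
  refine card_image_le_mul_of_fibers T _
    (fun x (h : Finset.Ioc (k - t) r) => (∑ i, (ψ h).eval (y x i)) % (p : ℤ) ^ (t * b - a)) ?_ ?_
  · refine (card_image_pi_emod_pow_le T hp.pos
      (fun (h : Finset.Ioc (k - t) r) x => ∑ i, (ψ h).eval (y x i))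
      (fun h => t * b - h * a) (fun _ => t * b - a) ?_).trans ?_
    · intro h x hx x' hx'
      obtain ⟨h, hh⟩ := h
      rw [Finset.mem_Ioc] at hh
      simp only
      rw [← Finset.sum_sub_distrib]
      refine hsum h (by omega) hh.2 x hx x' hx' _ fun j hj hjk => hhigh x hx x' hx' j ?_ hjk
      rwa [if_neg (by omega)] at hj
    · refine Nat.pow_le_pow_right hp.pos ?_
      rw [Finset.sum_coe_sort (Finset.Ioc (k - t) r) fun h => t * b - a - (t * b - h * a)]
      refine Finset.sum_le_sum fun h hh => ?_
      rw [Finset.mem_Ioc] at hh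
      obtain ⟨m, rfl⟩ : ∃ m, h = m + 1 := ⟨h - 1, by omega⟩
      rw [Nat.add_sub_cancel, add_mul]
      omega
  · intro U hU hconst
    have hdvd : ∀ h, 1 ≤ h → h ≤ r → ∀ x ∈ U, ∀ x' ∈ U,
        (p : ℤ) ^ (t * b - a) ∣ ∑ i, ((ψ h).eval (y x i) - (ψ h).eval (y x' i)) := by
      intro h h1 hr x hx x' hx'
      by_cases hkt : h ≤ k - t
      · refine (pow_dvd_pow _ ?_).trans (hsum h h1 hr x (hU hx) x' (hU hx') ((t + 1) * b) ?_)
        · have : (h - 1) * a ≤ b := (Nat.mul_le_mul_right a (by omega)).trans hba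
          obtain ⟨m, rfl⟩ : ∃ m, h = m + 1 := ⟨h - 1, by omega⟩
          rw [Nat.add_sub_cancel] at this
          rw [add_mul, add_mul]
          omega
        · intro j hj hjk
          rw [if_pos hkt] at hj
          exact (pow_dvd_pow _ (Nat.mul_le_mul_right b hj)).trans
            (hlow x (hU hx) x' (hU hx') j hj hjk)
      · rw [Finset.sum_sub_distrib]
        exact dvd_sub_of_emod_eq_emod
          (congrFun (hconst x hx x' hx') ⟨h, Finset.mem_Ioc.2 ⟨by omega, hr⟩⟩)
    refine card_image_le_of_sum_eval_dvd hp (by omega) U _ y (fun h => ψ ((h : ℕ) + 1))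
      (t * b - a) ?_ ?_ ?_ ?_
    · intro x hx x' hx' n hn1 hnr
      have h1 : (p : ℤ) ∣ ∑ i, ((ψ n).eval (y x i) - (ψ n).eval (y x' i)) :=
        (dvd_pow_self _ (by omega)).trans (hdvd n hn1 hnr x hx x' hx')
      have h2 : ∑ i, ((ψ n).eval (y x i) - (ψ n).eval (y x' i)) =
          Δ n * ∑ i, (y x i ^ n - y x' i ^ n) +
            p * ∑ i, ((R n).eval (y x i) - (R n).eval (y x' i)) := by
        rw [Finset.mul_sum, Finset.mul_sum, ← Finset.sum_add_distrib]
        refine Finset.sum_congr rfl fun i _ => ?_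
        simp only [hψ, Polynomial.eval_add, Polynomial.eval_mul, Polynomial.eval_pow,
          Polynomial.eval_X, Polynomial.eval_C]
        ring
      rw [h2] at h1
      have h3 := (Int.dvd_add_left (dvd_mul_right _ _)).1 h1
      exact ((Nat.prime_iff_prime_int.1 hp).dvd_or_dvd h3).resolve_left (hΔR n hn1 hnr).1
    · intro x hx d hd
      refine eq_zero_of_sum_weighted_pow_eq_zero (v := fun i => ((y x i : ℤ) : ZMod p))
        (w := fun _ => 1) (c := fun h => ((Δ ((h : ℕ) + 1) : ℤ) : ZMod p) * (((h : ℕ) + 1 : ℕ)))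
        ?_ (fun _ => one_ne_zero) ?_ d ?_
      · intro i j hij
        apply hinj x (hU hx)
        simp only at hij
        rw [← sub_eq_zero, ← Int.cast_sub, ZMod.intCast_zmod_eq_zero_iff_dvd] at hij
        rw [hxy x (hU hx) i, hxy x (hU hx) j, add_sub_add_left_eq_sub, ← mul_sub, pow_succ]
        exact mul_dvd_mul_left _ hij
      · intro h
        refine mul_ne_zero ?_ ?_
        · rw [Ne, ZMod.intCast_zmod_eq_zero_iff_dvd]
          exact (hΔR _ (by omega) (by omega)).1
        · intro h0
          have := Nat.le_of_dvd (by omega) ((ZMod.natCast_eq_zero_iff _ p).1 h0)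
          omega
      · intro h
        rw [← hd h]
        refine Finset.sum_congr rfl fun i _ => ?_
        simp only [hψ, Polynomial.derivative_add, Polynomial.derivative_C_mul,
          Polynomial.derivative_X_pow, Polynomial.eval_add, Polynomial.eval_mul,
          Polynomial.eval_pow, Polynomial.eval_X, Polynomial.eval_C, Nat.add_sub_cancel]
        push_cast
        rw [CharP.cast_eq_zero (ZMod p) p]
        ring
    · intro x hx x' hx' h
      exact hdvd _ (by omega) (by omega) x hx x' hx'
    · intro x hx x' hx' h
      funext i
      apply emod_eq_emod_of_dvd_sub
      rw [hxy x (hU hx) i, hxy x' (hU hx') i, add_sub_add_left_eq_sub, ← mul_sub,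
        show t * b = a + (t * b - a) by omega, pow_add]
      exact mul_dvd_mul_left _ (h i)

/-- The number of residue classes modulo `p ^ (t * b)` occupied by conditioned tuples that share
all their shifted power sums of degree `j` modulo `p ^ (j * b)`. -/
theorem card_residues_le {p k r t a b : ℕ} (hp : p.Prime) (hpk : k < p) (hrk : r ≤ k)
    (ht : 1 ≤ t) (htk : t ≤ k) (hab : a < b) (hba : (k - t - 1) * a ≤ b) (ξ η : ℤ)
    (S : Finset (Fin r → ℤ))
    (hξ : ∀ x ∈ S, ∀ i, (p : ℤ) ^ a ∣ x i - ξ)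
    (hinj : ∀ x ∈ S, ∀ i j, (p : ℤ) ^ (a + 1) ∣ x i - x j → i = j)
    (hη : ∀ x ∈ S, ∀ i, ¬ (p : ℤ) ∣ x i - η)
    (hS : ∀ x ∈ S, ∀ y ∈ S, ∀ j, 1 ≤ j → j ≤ k →
      (p : ℤ) ^ (j * b) ∣ ∑ i, ((x i - η) ^ j - (y i - η) ^ j)) :
    #(S.image fun x i => x i % (p : ℤ) ^ (t * b)) ≤
      p ^ (∑ j ∈ Finset.Ioc (k - r) t, (t - j) * b) *
        (p ^ (∑ h ∈ Finset.Ioc (k - t) r, (h - 1) * a) * r ^ r) := by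
  refine card_image_le_mul_of_fibers S _ (fun x (j : Finset.Ioc (k - r) t) =>
    (∑ i, (x i - η) ^ (j : ℕ)) % (p : ℤ) ^ (t * b)) ?_ ?_
  · refine (card_image_pi_emod_pow_le S hp.pos
      (fun (j : Finset.Ioc (k - r) t) x => ∑ i, (x i - η) ^ (j : ℕ))
      (fun j => j * b) (fun _ => t * b) ?_).trans ?_
    · intro j x hx y hy
      obtain ⟨j, hj⟩ := j
      rw [Finset.mem_Ioc] at hj
      simp only
      rw [← Finset.sum_sub_distrib]
      exact hS x hx y hy j (by omega) (by omega)
    · refine Nat.pow_le_pow_right hp.pos ?_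
      rw [Finset.sum_coe_sort (Finset.Ioc (k - r) t) fun j => t * b - j * b]
      exact Finset.sum_le_sum fun j _ => (Nat.sub_mul t j b).ge
  · intro T hT hconst
    have hhigh : ∀ x ∈ T, ∀ y ∈ T, ∀ j, k - r < j → j ≤ k →
        (p : ℤ) ^ (t * b) ∣ ∑ i, ((x i - η) ^ j - (y i - η) ^ j) := by
      intro x hx y hy j hj hjk
      rcases le_or_gt j t with hjt | hjt
      · rw [Finset.sum_sub_distrib]
        exact dvd_sub_of_emod_eq_emod
          (congrFun (hconst x hx y hy) ⟨j, Finset.mem_Ioc.2 ⟨hj, hjt⟩⟩)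
      · exact (pow_dvd_pow _ (Nat.mul_le_mul_right b hjt.le)).trans
          (hS x (hT hx) y (hT hy) j (by omega) hjk)
    rcases T.eq_empty_or_nonempty with rfl | ⟨x₀, hx₀⟩
    · simp
    rcases Nat.eq_zero_or_pos a with rfl | ha
    · refine (card_residues_le_of_not_dvd hp hpk hrk η T
        (fun x hx i j hij => hinj x (hT hx) i j (by simpa using hij))
        (fun x hx => hη x (hT hx)) ?_ hhigh).trans (by simp)
      intro x hx y hy j hj1 hjk
      exact (dvd_pow_self _ (Nat.mul_pos hj1 hab).ne').trans
        (hS x (hT hx) y (hT hy) j hj1 hjk)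
    · rcases Nat.eq_zero_or_pos r with rfl | hr
      · exact (Finset.card_le_one.2 fun u _ v _ => Subsingleton.elim u v).trans
          (Nat.one_le_iff_ne_zero.2 (by simp))
      refine card_residues_le_of_modEq hp hpk hrk ht htk ha hab hba ξ η ?_ T
        (fun x hx => hξ x (hT hx)) (fun x hx => hinj x (hT hx)) ?_ hhigh
      · intro hdvd
        apply hη x₀ (hT hx₀) ⟨0, hr⟩
        have h1 : (p : ℤ) ∣ x₀ ⟨0, hr⟩ - ξ :=
          (dvd_pow_self _ ha.ne').trans (hξ x₀ (hT hx₀) ⟨0, hr⟩)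
        have := dvd_add h1 hdvd
        rwa [sub_add_sub_cancel] at this
      · intro x hx y hy j hj hjk
        exact hS x (hT hx) y (hT hy) j (by omega) hjk

/-- The character `α ↦ e(α · n)` of frequency `n`. -/
def chi {k : ℕ} (n : Fin k → ℤ) (α : Fin k → ℝ) : ℂ := ec (∑ j, α j * (n j : ℝ))

/-- The trigonometric polynomial `∑ e(α · P x)` over `x ∈ A`. -/
def trigSum {k : ℕ} {ι : Type*} (A : Finset ι) (P : ι → Fin k → ℤ) (α : Fin k → ℝ) : ℂ :=
  ∑ x ∈ A, chi (P x) α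

theorem ec_add (x y : ℝ) : ec (x + y) = ec x * ec y := by
  simp only [ec, ← Complex.exp_add]
  congr 1
  push_cast
  ring

theorem ec_sum {ι : Type*} (s : Finset ι) (f : ι → ℝ) : ec (∑ i ∈ s, f i) = ∏ i ∈ s, ec (f i) := by
  simp only [ec, ← Complex.exp_sum]
  congr 1
  push_cast
  rw [Finset.mul_sum]

theorem conj_ec (x : ℝ) : (starRingEnd ℂ) (ec x) = ec (-x) := by
  simp only [ec, ← Complex.exp_conj]
  congr 1
  simp [Complex.conj_ofNat]

theorem norm_ec (x : ℝ) : ‖ec x‖ = 1 := by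
  rw [ec, show (2 * Real.pi * Complex.I * x : ℂ) = ((2 * Real.pi * x : ℝ) : ℂ) * Complex.I by
    push_cast; ring]
  exact Complex.norm_exp_ofReal_mul_I _

theorem continuous_ec : Continuous ec := by
  unfold ec
  fun_prop

theorem chi_add {k : ℕ} (m n : Fin k → ℤ) (α : Fin k → ℝ) :
    chi (m + n) α = chi m α * chi n α := by
  rw [chi, chi, chi, ← ec_add, ← Finset.sum_add_distrib]
  congr 1
  exact Finset.sum_congr rfl fun j _ => by simp; ring

theorem conj_chi {k : ℕ} (n : Fin k → ℤ) (α : Fin k → ℝ) :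
    (starRingEnd ℂ) (chi n α) = chi (-n) α := by
  rw [chi, chi, conj_ec, ← Finset.sum_neg_distrib]
  congr 1
  exact Finset.sum_congr rfl fun j _ => by simp

theorem continuous_chi {k : ℕ} (n : Fin k → ℤ) : Continuous (chi n) := by
  unfold chi
  exact continuous_ec.comp (by fun_prop)

theorem norm_chi {k : ℕ} (n : Fin k → ℤ) (α : Fin k → ℝ) : ‖chi n α‖ = 1 := norm_ec _

theorem continuous_trigSum {k : ℕ} {ι : Type*} (A : Finset ι) (P : ι → Fin k → ℤ) :
    Continuous (trigSum A P) := by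
  unfold trigSum
  exact continuous_finsetSum _ fun x _ => continuous_chi _

theorem integrableOn_box {k : ℕ} {E : Type*} [NormedAddCommGroup E] {f : (Fin k → ℝ) → E}
    (hf : Continuous f) : IntegrableOn f (box k) := by
  have hcompact : IsCompact (Set.univ.pi fun _ : Fin k => Set.Icc (0 : ℝ) 1) :=
    isCompact_univ_pi fun _ => isCompact_Icc
  exact (hf.continuousOn.integrableOn_compact hcompact).mono_set
    (Set.pi_mono fun _ _ => Set.Ico_subset_Icc_self)

theorem integral_ec_mul_intCast (n : ℤ) :
    ∫ x in Set.Ico (0 : ℝ) 1, ec (x * n) = if n = 0 then 1 else 0 := by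
  rw [integral_Ico_eq_integral_Ioc, ← intervalIntegral.integral_of_le zero_le_one]
  split_ifs with hn
  · simp [hn, ec]
  · have hc : (2 * Real.pi * Complex.I * n : ℂ) ≠ 0 := by
      simp [Real.pi_ne_zero, hn]
    have heq : ∀ x : ℝ, ec (x * n) = Complex.exp ((2 * Real.pi * Complex.I * n : ℂ) * x) := by
      intro x
      rw [ec]
      congr 1
      push_cast
      ring
    simp_rw [heq]
    rw [integral_exp_mul_complex hc]
    have h1 : Complex.exp (2 * Real.pi * Complex.I * n * (1 : ℝ)) = 1 := by
      rw [Complex.exp_eq_one_iff]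
      exact ⟨n, by push_cast; ring⟩
    rw [h1]
    simp

theorem volume_restrict_box (k : ℕ) : (volume : Measure (Fin k → ℝ)).restrict (box k) =
    Measure.pi fun _ => (volume : Measure ℝ).restrict (Set.Ico 0 1) := by
  unfold _root_.box
  rw [volume_pi, Measure.restrict_pi_pi]

theorem integral_chi {k : ℕ} (n : Fin k → ℤ) :
    ∫ α in box k, chi n α = if n = 0 then 1 else 0 := by
  simp only [chi, ec_sum]
  rw [volume_restrict_box, integral_fintype_prod_eq_prod (fun j (x : ℝ) => ec (x * n j))]
  simp only [integral_ec_mul_intCast]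
  split_ifs with hn
  · simp [hn]
  · obtain ⟨j, hj⟩ := Function.ne_iff.1 hn
    exact Finset.prod_eq_zero (Finset.mem_univ j) (if_neg hj)

/-- Orthogonality: the mean square of a trigonometric polynomial counts coincidences among its
frequencies. -/
theorem integral_norm_sq_trigSum {k : ℕ} {ι : Type*} (A : Finset ι) (P : ι → Fin k → ℤ) :
    ∫ α in box k, ‖trigSum A P α‖ ^ 2 = #((A ×ˢ A).filter fun z => P z.1 = P z.2) := by
  have hsq : ∀ α, ((‖trigSum A P α‖ ^ 2 : ℝ) : ℂ) = ∑ z ∈ A ×ˢ A, chi (P z.1 - P z.2) α := by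
    intro α
    rw [Complex.ofReal_pow, ← Complex.mul_conj', trigSum, map_sum, Finset.sum_mul_sum,
      Finset.sum_product]
    refine Finset.sum_congr rfl fun x _ => Finset.sum_congr rfl fun y _ => ?_
    rw [conj_chi, ← chi_add, sub_eq_add_neg]
  have hC : ((∫ α in box k, ‖trigSum A P α‖ ^ 2 : ℝ) : ℂ) =
      (#((A ×ˢ A).filter fun z => P z.1 = P z.2) : ℂ) := by
    rw [← integral_complex_ofReal]
    simp_rw [hsq]
    rw [integral_finsetSum _ fun z _ => integrableOn_box (continuous_chi _)]
    simp_rw [integral_chi, sub_eq_zero]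
    rw [Finset.sum_boole]
  exact_mod_cast hC

theorem trigSum_mul {k : ℕ} {ι κ : Type*} (A : Finset ι) (P : ι → Fin k → ℤ) (B : Finset κ)
    (Q : κ → Fin k → ℤ) (α : Fin k → ℝ) :
    trigSum A P α * trigSum B Q α = trigSum (A ×ˢ B) (fun z => P z.1 + Q z.2) α := by
  simp only [trigSum]
  rw [Finset.sum_mul_sum, Finset.sum_product]
  exact Finset.sum_congr rfl fun x _ => Finset.sum_congr rfl fun y _ => (chi_add _ _ _).symm

theorem chi_sum {k : ℕ} {ι : Type*} (s : Finset ι) (n : ι → Fin k → ℤ) (α : Fin k → ℝ) :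
    chi (∑ i ∈ s, n i) α = ∏ i ∈ s, chi (n i) α := by
  induction s using Finset.cons_induction with
  | empty => simp [chi, ec]
  | cons i s hi ih => rw [Finset.sum_cons, Finset.prod_cons, chi_add, ih]

theorem prod_trigSum {k n : ℕ} {ι : Type*} (A : Fin n → Finset ι) (P : ι → Fin k → ℤ)
    (α : Fin k → ℝ) :
    ∏ i, trigSum (A i) P α = trigSum (Fintype.piFinset A) (fun x => ∑ i, P (x i)) α := by
  simp only [trigSum, chi_sum]
  rw [Finset.prod_univ_sum]

theorem trigSum_pow {k : ℕ} {ι : Type*} (A : Finset ι) (P : ι → Fin k → ℤ) (n : ℕ)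
    (α : Fin k → ℝ) :
    trigSum A P α ^ n =
      trigSum (Fintype.piFinset fun _ : Fin n => A) (fun x => ∑ i, P (x i)) α := by
  rw [← prod_trigSum, Finset.prod_const, Finset.card_univ, Fintype.card_fin]

theorem integral_norm_sq_trigSum_mono {k : ℕ} {ι : Type*} {A B : Finset ι} (hAB : A ⊆ B)
    (P : ι → Fin k → ℤ) :
    ∫ α in box k, ‖trigSum A P α‖ ^ 2 ≤ ∫ α in box k, ‖trigSum B P α‖ ^ 2 := by
  rw [integral_norm_sq_trigSum, integral_norm_sq_trigSum]
  exact_mod_cast Finset.card_le_card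
    (Finset.filter_subset_filter _ (Finset.product_subset_product hAB hAB))

theorem integral_norm_sq_mul_trigSum_mono {k : ℕ} {ι κ : Type*} {A A' : Finset ι} (hA : A ⊆ A')
    (P : ι → Fin k → ℤ) (B : Finset κ) (Q : κ → Fin k → ℤ) :
    ∫ α in box k, ‖trigSum A P α‖ ^ 2 * ‖trigSum B Q α‖ ^ 2 ≤
      ∫ α in box k, ‖trigSum A' P α‖ ^ 2 * ‖trigSum B Q α‖ ^ 2 := by
  simp_rw [← mul_pow, ← norm_mul, trigSum_mul]
  exact integral_norm_sq_trigSum_mono (Finset.product_subset_product hA subset_rfl) _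

theorem integral_norm_sq_mul_trigSum {k : ℕ} {ι κ : Type*} (A : Finset ι) (P : ι → Fin k → ℤ)
    (B : Finset κ) (Q : κ → Fin k → ℤ) :
    ∫ α in box k, ‖trigSum A P α‖ ^ 2 * ‖trigSum B Q α‖ ^ 2 =
      #(((A ×ˢ B) ×ˢ (A ×ˢ B)).filter
        fun z => P z.1.1 + Q z.1.2 = P z.2.1 + Q z.2.2) := by
  simp_rw [← mul_pow, ← norm_mul, trigSum_mul]
  exact integral_norm_sq_trigSum _ _

/-- If every coincidence of frequencies forces equality of the invariant `m`, the mean square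
splits over the level sets of `m`. -/
theorem integral_eq_sum_integral_fiber {k : ℕ} {ι κ δ : Type*} [DecidableEq δ] (A : Finset ι)
    (P : ι → Fin k → ℤ) (B : Finset κ) (Q : κ → Fin k → ℤ) (m : ι → δ)
    (hm : ∀ x ∈ A, ∀ y ∈ A, ∀ w ∈ B, ∀ w' ∈ B, P x + Q w = P y + Q w' → m x = m y) :
    ∫ α in box k, ‖trigSum A P α‖ ^ 2 * ‖trigSum B Q α‖ ^ 2 =
      ∑ d ∈ A.image m, ∫ α in box k,
        ‖trigSum (A.filter fun x => m x = d) P α‖ ^ 2 * ‖trigSum B Q α‖ ^ 2 := by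
  simp_rw [integral_norm_sq_mul_trigSum]
  rw [← Nat.cast_sum, Nat.cast_inj]
  rw [Finset.card_eq_sum_card_fiberwise (f := fun z => m z.1.1) (t := A.image m)]
  · refine Finset.sum_congr rfl fun d _ => ?_
    congr 1
    ext z
    simp only [Finset.mem_filter, Finset.mem_product]
    constructor
    · rintro ⟨⟨⟨⟨h1, h2⟩, h3, h4⟩, h5⟩, h6⟩
      exact ⟨⟨⟨⟨h1, h6⟩, h2⟩, ⟨h3, (hm _ h1 _ h3 _ h2 _ h4 h5).symm.trans h6⟩, h4⟩, h5⟩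
    · rintro ⟨⟨⟨⟨h1, h6⟩, h2⟩, ⟨h3, _⟩, h4⟩, h5⟩
      exact ⟨⟨⟨⟨h1, h2⟩, h3, h4⟩, h5⟩, h6⟩
  · intro z hz
    simp only [Finset.coe_filter, Finset.mem_product, Set.mem_ofPred_eq] at hz
    exact Finset.mem_coe.2 (Finset.mem_image_of_mem _ hz.1.1.1)

/-- Discarding coincidences that do not preserve `m` decreases the mean square. -/
theorem sum_integral_fiber_le {k : ℕ} {ι κ δ : Type*} [DecidableEq δ] (A : Finset ι)
    (P : ι → Fin k → ℤ) (B : Finset κ) (Q : κ → Fin k → ℤ) (m : ι → δ) (D : Finset δ) :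
    ∑ d ∈ D, ∫ α in box k,
        ‖trigSum (A.filter fun x => m x = d) P α‖ ^ 2 * ‖trigSum B Q α‖ ^ 2 ≤
      ∫ α in box k, ‖trigSum A P α‖ ^ 2 * ‖trigSum B Q α‖ ^ 2 := by
  simp_rw [integral_norm_sq_mul_trigSum]
  rw [← Nat.cast_sum, Nat.cast_le]
  rw [← Finset.card_sigma]
  refine Finset.card_le_card_of_injOn (fun z => z.2) ?_ ?_
  · rintro ⟨d, z⟩ hz
    simp only [Finset.mem_coe, Finset.mem_sigma, Finset.mem_filter, Finset.mem_product] at hz ⊢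
    exact ⟨⟨⟨hz.2.1.1.1.1, hz.2.1.1.2⟩, hz.2.1.2.1.1, hz.2.1.2.2⟩, hz.2.2⟩
  · rintro ⟨d, z⟩ hz ⟨d', z'⟩ hz' rfl
    simp only [Finset.mem_coe, Finset.mem_sigma, Finset.mem_filter, Finset.mem_product] at hz hz'
    obtain rfl := hz.2.1.1.1.2.symm.trans hz'.2.1.1.1.2
    rfl

theorem trigSum_eq_sum_fiber {k : ℕ} {ι γ : Type*} [DecidableEq γ] (A : Finset ι)
    (P : ι → Fin k → ℤ) (cl : ι → γ) (α : Fin k → ℝ) :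
    trigSum A P α = ∑ c ∈ A.image cl, trigSum (A.filter fun x => cl x = c) P α :=
  (Finset.sum_fiberwise_of_maps_to (fun _ hx => Finset.mem_image_of_mem cl hx) _).symm

theorem norm_sq_trigSum_le {k : ℕ} {ι γ : Type*} [DecidableEq γ] (A : Finset ι)
    (P : ι → Fin k → ℤ) (cl : ι → γ) (α : Fin k → ℝ) :
    ‖trigSum A P α‖ ^ 2 ≤
      #(A.image cl) * ∑ c ∈ A.image cl, ‖trigSum (A.filter fun x => cl x = c) P α‖ ^ 2 := by
  rw [trigSum_eq_sum_fiber A P cl]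
  exact (pow_le_pow_left₀ (norm_nonneg _) (norm_sum_le _ _) 2).trans sq_sum_le_card_mul_sum_sq

theorem integrableOn_norm_sq_mul_trigSum {k : ℕ} {ι κ : Type*} (A : Finset ι)
    (P : ι → Fin k → ℤ) (B : Finset κ) (Q : κ → Fin k → ℤ) :
    IntegrableOn (fun α => ‖trigSum A P α‖ ^ 2 * ‖trigSum B Q α‖ ^ 2) (box k) :=
  integrableOn_box ((((continuous_trigSum A P).norm).pow 2).mul
    (((continuous_trigSum B Q).norm).pow 2))

/-- If every coincidence of frequencies forces equality of the invariant `m`, and each level set of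
`m` meets at most `D` classes of `cl`, then the mean square is at most `D` times the sum of the mean
squares over the classes. -/
theorem integral_le_mul_sum_integral_class {k D : ℕ} {ι κ γ δ : Type*} [DecidableEq γ]
    [DecidableEq δ] (A : Finset ι) (P : ι → Fin k → ℤ) (B : Finset κ) (Q : κ → Fin k → ℤ)
    (cl : ι → γ) (m : ι → δ)
    (hm : ∀ x ∈ A, ∀ y ∈ A, ∀ w ∈ B, ∀ w' ∈ B, P x + Q w = P y + Q w' → m x = m y)
    (hD : ∀ d, #((A.filter fun x => m x = d).image cl) ≤ D) :
    ∫ α in box k, ‖trigSum A P α‖ ^ 2 * ‖trigSum B Q α‖ ^ 2 ≤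
      D * ∑ c ∈ A.image cl, ∫ α in box k,
        ‖trigSum (A.filter fun x => cl x = c) P α‖ ^ 2 * ‖trigSum B Q α‖ ^ 2 := by
  have hlevel : ∀ d, ∫ α in box k,
      ‖trigSum (A.filter fun x => m x = d) P α‖ ^ 2 * ‖trigSum B Q α‖ ^ 2 ≤
      D * ∑ c ∈ A.image cl, ∫ α in box k,
        ‖trigSum ((A.filter fun x => cl x = c).filter fun x => m x = d) P α‖ ^ 2 *
          ‖trigSum B Q α‖ ^ 2 := by
    intro d
    rw [← integral_finsetSum _ fun c _ => integrableOn_norm_sq_mul_trigSum _ _ _ _,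
      ← integral_const_mul]
    refine integral_mono (integrableOn_norm_sq_mul_trigSum _ _ _ _)
      ((integrable_finsetSum _ fun c _ => integrableOn_norm_sq_mul_trigSum _ _ _ _).const_mul _)
      fun α => ?_
    simp only
    rw [← Finset.sum_mul, ← mul_assoc]
    refine mul_le_mul_of_nonneg_right ?_ (by positivity)
    refine (norm_sq_trigSum_le _ P cl α).trans
      (mul_le_mul (by exact_mod_cast hD d) ?_ (by positivity) (by positivity))
    simp_rw [Finset.filter_filter, and_comm]
    exact Finset.sum_le_sum_of_subset_of_nonneg
      (Finset.image_subset_image (Finset.filter_subset _ _)) fun _ _ _ => by positivity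
  rw [integral_eq_sum_integral_fiber A P B Q m hm]
  refine (Finset.sum_le_sum fun d _ => hlevel d).trans ?_
  rw [← Finset.mul_sum, Finset.sum_comm]
  gcongr with c hc
  exact sum_integral_fiber_le _ P B Q m _

/-- The point `(x, x², …, x^k)` of the moment curve. -/
def moment (k : ℕ) (x : ℤ) : Fin k → ℤ := fun j => x ^ ((j : ℕ) + 1)

/-- The integers of `[1, X]` congruent to `ξ` modulo `p ^ c`. -/
def classSet (p : ℕ) (X : ℝ) (c : ℕ) (ξ : ℤ) : Finset ℤ :=
  (Finset.Icc (1 : ℤ) ⌊X⌋).filter fun x => (p : ℤ) ^ c ∣ x - ξ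

/-- The `r`-tuples from `[1, X]` congruent to `ξ` modulo `p ^ c` with entries pairwise distinct
modulo `p ^ (c + 1)`. -/
def condSet (p r : ℕ) (X : ℝ) (c : ℕ) (ξ : ℤ) : Finset (Fin r → ℤ) :=
  (Fintype.piFinset fun _ => Finset.Icc (1 : ℤ) ⌊X⌋).filter fun x =>
    (∀ i, (p : ℤ) ^ c ∣ x i - ξ) ∧ ∀ i j, (p : ℤ) ^ (c + 1) ∣ x i - x j → i = j

theorem fexp_eq_trigSum (k p : ℕ) (X : ℝ) (c : ℕ) (ξ : ℤ) (α : Fin k → ℝ) :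
    fexp k p X c ξ α = trigSum (classSet p X c ξ) (moment k) α := by
  have hset : classSet p X c ξ =
      (Finset.Icc (1 : ℤ) ⌊X⌋).filter fun x => Int.ModEq ((p : ℤ) ^ c) x ξ :=
    Finset.filter_congr fun x _ => by rw [Int.modEq_comm, Int.modEq_iff_dvd]
  rw [fexp, trigSum, hset]
  refine Finset.sum_congr rfl fun x _ => ?_
  simp [chi, moment]

theorem fexp_congr {k p : ℕ} {X : ℝ} {c : ℕ} {ξ ξ' : ℤ} (h : (p : ℤ) ^ c ∣ ξ - ξ') :
    fexp k p X c ξ = fexp k p X c ξ' := by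
  have hset : classSet p X c ξ = classSet p X c ξ' :=
    Finset.filter_congr fun x _ => by
      rw [show x - ξ' = (x - ξ) + (ξ - ξ') by ring]
      exact (dvd_add_left h).symm
  funext α
  rw [fexp_eq_trigSum, fexp_eq_trigSum, hset]

/-- The representative of `x` modulo `q` in the interval `[1, q]`. -/
def posRes (q x : ℤ) : ℤ := (x - 1) % q + 1

theorem dvd_sub_posRes (q x : ℤ) : q ∣ x - posRes q x := by
  have := Int.dvd_self_sub_emod (x := x - 1) (m := q)
  rwa [posRes, ← sub_sub, sub_right_comm]

theorem one_le_posRes {q : ℤ} (hq : 0 < q) (x : ℤ) : 1 ≤ posRes q x := by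
  have := Int.emod_nonneg (x - 1) hq.ne'
  rw [posRes]
  omega

theorem posRes_le {q : ℤ} (hq : 0 < q) (x : ℤ) : posRes q x ≤ q := by
  have := Int.emod_lt_of_pos (x - 1) hq
  rw [posRes]
  omega

theorem posRes_eq_iff {q : ℤ} (x : ℤ) {v : ℤ} (h1 : 1 ≤ v) (h2 : v ≤ q) :
    posRes q x = v ↔ q ∣ x - v := by
  constructor
  · rintro rfl
    exact dvd_sub_posRes q x
  · intro h
    have h3 : (x - 1) % q = (v - 1) % q := emod_eq_emod_of_dvd_sub (by simpa using h)
    rw [posRes, h3, Int.emod_eq_of_lt (by omega) (by omega)]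
    ring

theorem finsum_mem_prod_fexp {k p r : ℕ} (X : ℝ) (c : ℕ) (V : Set (Fin r → ℤ))
    (hV : ∀ v ∈ V, ∀ i, 1 ≤ v i ∧ v i ≤ (p : ℤ) ^ c) (α : Fin k → ℝ) :
    ∑ᶠ v ∈ V, ∏ i, fexp k p X c (v i) α =
      trigSum ((Fintype.piFinset fun _ => Finset.Icc (1 : ℤ) ⌊X⌋).filter fun x : Fin r → ℤ =>
        (fun i => posRes ((p : ℤ) ^ c) (x i)) ∈ V) (fun x => ∑ i, moment k (x i)) α := by
  have hfin : V.Finite := by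
    refine (Fintype.piFinset fun _ : Fin r => Finset.Icc (1 : ℤ) ((p : ℤ) ^ c)).finite_toSet.subset
      fun v hv => ?_
    simp only [Finset.mem_coe, Fintype.mem_piFinset, Finset.mem_Icc]
    exact hV v hv
  rw [finsum_mem_eq_finite_toFinset_sum _ hfin, trigSum]
  refine Eq.trans ?_ (Finset.sum_fiberwise_of_maps_to (t := hfin.toFinset)
    (g := fun (x : Fin r → ℤ) i => posRes ((p : ℤ) ^ c) (x i)) ?_ _)
  · refine Finset.sum_congr rfl fun v hv => ?_
    rw [Set.Finite.mem_toFinset] at hv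
    simp_rw [fexp_eq_trigSum]
    rw [prod_trigSum, trigSum]
    refine Finset.sum_congr ?_ fun _ _ => rfl
    ext x
    simp only [classSet, Fintype.mem_piFinset, Finset.mem_filter, funext_iff]
    constructor
    · intro h
      have h1 : ∀ i, posRes ((p : ℤ) ^ c) (x i) = v i := fun i =>
        (posRes_eq_iff _ (hV v hv i).1 (hV v hv i).2).2 (h i).2
      refine ⟨⟨fun i => (h i).1, ?_⟩, h1⟩
      rwa [show (fun i => posRes ((p : ℤ) ^ c) (x i)) = v from funext h1]
    · rintro ⟨⟨h1, -⟩, h2⟩ i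
      exact ⟨h1 i, (posRes_eq_iff _ (hV v hv i).1 (hV v hv i).2).1 (h2 i)⟩
  · intro x hx
    rw [Set.Finite.mem_toFinset]
    exact (Finset.mem_filter.1 hx).2

theorem posRes_mem_XiSet_iff {p r c : ℕ} (hp : 0 < p) (ξ : ℤ) (x : Fin r → ℤ) :
    (fun i => posRes ((p : ℤ) ^ (c + 1)) (x i)) ∈ XiSet p r c ξ ↔
      (∀ i, (p : ℤ) ^ c ∣ x i - ξ) ∧ ∀ i j, (p : ℤ) ^ (c + 1) ∣ x i - x j → i = j := by
  have hq : (0 : ℤ) < (p : ℤ) ^ (c + 1) := by positivity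
  have hcast : ∀ y : ℤ, ((posRes ((p : ℤ) ^ (c + 1)) y : ℤ) : ZMod (p ^ (c + 1))) = y := by
    intro y
    rw [eq_comm, ← sub_eq_zero, ← Int.cast_sub, ZMod.intCast_zmod_eq_zero_iff_dvd]
    push_cast
    exact dvd_sub_posRes _ _
  have hmod : ∀ y : ℤ, Int.ModEq ((p : ℤ) ^ c) (posRes ((p : ℤ) ^ (c + 1)) y) ξ ↔
      (p : ℤ) ^ c ∣ y - ξ := by
    intro y
    have h := (pow_dvd_pow (p : ℤ) (Nat.le_succ c)).trans (dvd_sub_posRes _ y)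
    rw [Int.modEq_comm, Int.modEq_iff_dvd]
    rw [show y - ξ =
      (y - posRes ((p : ℤ) ^ (c + 1)) y) + (posRes ((p : ℤ) ^ (c + 1)) y - ξ) by ring]
    exact (dvd_add_right h).symm
  simp only [XiSet, Set.mem_ofPred_eq, hmod, hcast, one_le_posRes hq, posRes_le hq, and_self,
    implies_true, true_and]
  refine and_congr_right fun _ => ⟨fun h i j hij => h ?_, fun h i j hij => h i j ?_⟩
  · simp only
    rw [← sub_eq_zero, ← Int.cast_sub, ZMod.intCast_zmod_eq_zero_iff_dvd]
    exact_mod_cast hij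
  · simp only at hij
    rw [← sub_eq_zero, ← Int.cast_sub, ZMod.intCast_zmod_eq_zero_iff_dvd] at hij
    exact_mod_cast hij

theorem Fexp_eq_trigSum {k p r : ℕ} (hp : 0 < p) (X : ℝ) (c : ℕ) (ξ : ℤ) (α : Fin k → ℝ) :
    Fexp k p r X c ξ α =
      trigSum (condSet p r X c ξ) (fun x => ∑ i, moment k (x i)) α := by
  rw [Fexp, finsum_mem_prod_fexp X (c + 1) _ fun v hv => hv.1]
  simp_rw [posRes_mem_XiSet_iff hp]
  rfl

theorem Ftilde_eq_trigSum {k p r : ℕ} (hp : 0 < p) (X : ℝ) (η : ℤ) (α : Fin k → ℝ) :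
    Ftilde k p r X η α =
      trigSum ((condSet p r X 0 0).filter fun x => ∀ i, ¬ (p : ℤ) ∣ x i - η)
        (fun x => ∑ i, moment k (x i)) α := by
  rw [Ftilde]
  have h := finsum_mem_prod_fexp (k := k) (p := p) X 1 (XiTilde p r η)
    (fun v hv => hv.1.1) α
  rw [h, condSet, Finset.filter_filter]
  congr 1
  refine Finset.filter_congr fun x _ => ?_
  rw [XiTilde, Set.mem_ofPred_eq]
  refine and_congr (posRes_mem_XiSet_iff hp 0 x) (forall_congr' fun i => not_congr ?_)
  have h := dvd_sub_posRes (p : ℤ) (x i)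
  rw [pow_one, Int.modEq_comm, Int.modEq_iff_dvd,
    show x i - η = (x i - posRes (p : ℤ) (x i)) + (posRes (p : ℤ) (x i) - η) by ring]
  exact (dvd_add_right h).symm

theorem filter_condSet_eq {p r a : ℕ} {X : ℝ} {ξ η : ℤ} (ha : a ≠ 0) (h : ¬ (p : ℤ) ∣ η - ξ) :
    ((condSet p r X a ξ).filter fun x => ∀ i, ¬ (p : ℤ) ∣ x i - η) = condSet p r X a ξ := by
  refine Finset.filter_true_of_mem fun x hx i hi => h ?_
  have h1 := (dvd_pow_self (p : ℤ) ha).trans ((Finset.mem_filter.1 hx).2.1 i)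
  have h2 := dvd_sub h1 hi
  rwa [sub_sub_sub_cancel_left] at h2

/-- Translation invariance of the Vinogradov system. -/
theorem sum_sub_pow_eq_of_sum_pow_eq {ι : Type*} [Fintype ι] {k : ℕ} {x y : ι → ℤ} (η : ℤ)
    (h : ∀ j, 1 ≤ j → j ≤ k → ∑ i, x i ^ j = ∑ i, y i ^ j) {j : ℕ} (hj : j ≤ k) :
    ∑ i, (x i - η) ^ j = ∑ i, (y i - η) ^ j := by
  simp_rw [sub_eq_add_neg, add_pow]
  rw [Finset.sum_comm, Finset.sum_comm (s := Finset.univ)]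
  refine Finset.sum_congr rfl fun l hl => ?_
  rw [← Finset.sum_mul, ← Finset.sum_mul, ← Finset.sum_mul, ← Finset.sum_mul]
  congr 2
  rcases Nat.eq_zero_or_pos l with rfl | hl'
  · simp
  · exact h l hl' ((Nat.lt_succ_iff.1 (Finset.mem_range.1 hl)).trans hj)

theorem sum_moment_apply {ι : Type*} (s : Finset ι) (k : ℕ) (x : ι → ℤ) (j : Fin k) :
    (∑ i ∈ s, moment k (x i)) j = ∑ i ∈ s, x i ^ ((j : ℕ) + 1) := by
  simp [Finset.sum_apply, moment]

theorem sum_moment_eq_iff {ι : Type*} (s : Finset ι) (k : ℕ) (x y : ι → ℤ) :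
    ∑ i ∈ s, moment k (x i) = ∑ i ∈ s, moment k (y i) ↔
      ∀ j, 1 ≤ j → j ≤ k → ∑ i ∈ s, x i ^ j = ∑ i ∈ s, y i ^ j := by
  simp only [funext_iff, sum_moment_apply]
  constructor
  · intro h j h1 h2
    obtain ⟨j, rfl⟩ := Nat.exists_eq_add_of_le' h1
    exact h ⟨j, h2⟩
  · exact fun h j => h _ (Nat.succ_pos _) j.2

theorem pow_dvd_sum_sub_of_coincidence {p k r t b : ℕ} {X : ℝ} {η : ℤ} {x y : Fin r → ℤ}
    {w w' : Fin t → Fin r → ℤ} (hw : ∀ l, w l ∈ condSet p r X b η)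
    (hw' : ∀ l, w' l ∈ condSet p r X b η)
    (h : ∑ i, moment k (x i) + ∑ l, ∑ i, moment k (w l i) =
      ∑ i, moment k (y i) + ∑ l, ∑ i, moment k (w' l i)) {j : ℕ} (hj : j ≤ k) :
    (p : ℤ) ^ (j * b) ∣ ∑ i, (x i - η) ^ j - ∑ i, (y i - η) ^ j := by
  let u : Fin r ⊕ (Fin t × Fin r) → ℤ := Sum.elim x fun z => w z.1 z.2
  let u' : Fin r ⊕ (Fin t × Fin r) → ℤ := Sum.elim y fun z => w' z.1 z.2
  have hu : ∑ i, moment k (u i) = ∑ i, moment k (u' i) := by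
    simpa [u, u', Fintype.sum_sum_type, Fintype.sum_prod_type] using h
  have hpow := sum_sub_pow_eq_of_sum_pow_eq η ((sum_moment_eq_iff _ _ _ _).1 hu) hj
  simp only [u, u', Fintype.sum_sum_type, Sum.elim_inl, Sum.elim_inr] at hpow
  have hdvd : ∀ {v : Fin t → Fin r → ℤ}, (∀ l, v l ∈ condSet p r X b η) →
      (p : ℤ) ^ (j * b) ∣ ∑ z : Fin t × Fin r, (v z.1 z.2 - η) ^ j := by
    intro v hv
    refine Finset.dvd_sum fun z _ => ?_
    rw [mul_comm, pow_mul]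
    exact pow_dvd_pow_of_dvd ((Finset.mem_filter.1 (hv z.1)).2.1 z.2) j
  have h1 := dvd_sub (hdvd hw') (hdvd hw)
  rwa [show ∑ i, (x i - η) ^ j - ∑ i, (y i - η) ^ j =
    ∑ z : Fin t × Fin r, (w' z.1 z.2 - η) ^ j - ∑ z : Fin t × Fin r, (w z.1 z.2 - η) ^ j by
    linear_combination hpow]

/-- The bound for the number of residue classes modulo `p ^ (t * b)` in the congruencing step. -/
def classBound (p k r t a b : ℕ) : ℕ :=
  p ^ (∑ j ∈ Finset.Ioc (k - r) t, (t - j) * b) *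
    (p ^ (∑ h ∈ Finset.Ioc (k - t) r, (h - 1) * a) * r ^ r)

/-- The congruencing step: a mean value over conditioned tuples is bounded by mean values over
tuples in fixed residue classes modulo `p ^ (t * b)`. -/
theorem integral_le_sum_residue_classes {p k r t a b : ℕ} (hp : p.Prime) (hpk : k < p)
    (hrk : r ≤ k) (ht : 1 ≤ t) (htk : t ≤ k) (hab : a < b) (hba : (k - t - 1) * a ≤ b) (X : ℝ)
    (ξ η : ℤ) (A : Finset (Fin r → ℤ))
    (hA : A = (condSet p r X a ξ).filter fun x => ∀ i, ¬ (p : ℤ) ∣ x i - η) :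
    ∫ α in box k, ‖trigSum A (fun x => ∑ i, moment k (x i)) α‖ ^ 2 *
        ‖Fexp k p r X b η α‖ ^ (2 * t) ≤
      classBound p k r t a b * ∑ c ∈ A.image fun x i => x i % (p : ℤ) ^ (t * b), ∫ α in box k,
        (∏ i, ‖fexp k p X (t * b) (c i) α‖ ^ 2) * ‖Fexp k p r X b η α‖ ^ (2 * t) := by
  have hF : ∀ α : Fin k → ℝ, ‖Fexp k p r X b η α‖ ^ (2 * t) =
      ‖trigSum (Fintype.piFinset fun _ : Fin t => condSet p r X b η)
        (fun w => ∑ l, ∑ i, moment k (w l i)) α‖ ^ 2 := by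
    intro α
    rw [Fexp_eq_trigSum hp.pos, mul_comm, pow_mul, ← norm_pow, trigSum_pow]
  simp_rw [hF]
  refine (integral_le_mul_sum_integral_class (D := classBound p k r t a b) A
    (fun x => ∑ i, moment k (x i))
    (Fintype.piFinset fun _ : Fin t => condSet p r X b η)
    (fun w => ∑ l, ∑ i, moment k (w l i)) (fun x i => x i % (p : ℤ) ^ (t * b))
    (fun x (j : Fin k) => (∑ i, (x i - η) ^ ((j : ℕ) + 1)) % (p : ℤ) ^ (((j : ℕ) + 1) * b))
    ?_ ?_).trans ?_
  · intro x _ y _ w hw w' hw' h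
    funext j
    exact emod_eq_emod_of_dvd_sub (pow_dvd_sum_sub_of_coincidence (Fintype.mem_piFinset.1 hw)
      (Fintype.mem_piFinset.1 hw') h j.2)
  · intro d
    have hmem : ∀ x ∈ A.filter fun x => (fun j : Fin k =>
        (∑ i, (x i - η) ^ ((j : ℕ) + 1)) % (p : ℤ) ^ (((j : ℕ) + 1) * b)) = d,
        ((∀ i, (p : ℤ) ^ a ∣ x i - ξ) ∧ ∀ i j, (p : ℤ) ^ (a + 1) ∣ x i - x j → i = j) ∧
        ∀ i, ¬ (p : ℤ) ∣ x i - η := by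
      intro x hx
      rw [hA] at hx
      have h1 := Finset.mem_filter.1 (Finset.mem_filter.1 hx).1
      exact ⟨(Finset.mem_filter.1 h1.1).2, h1.2⟩
    refine card_residues_le hp hpk hrk ht htk hab hba ξ η _ (fun x hx => (hmem x hx).1.1)
      (fun x hx => (hmem x hx).1.2) (fun x hx => (hmem x hx).2) ?_
    intro x hx y hy j h1 h2
    obtain ⟨j, rfl⟩ := Nat.exists_eq_add_of_le' h1
    rw [Finset.sum_sub_distrib]
    refine dvd_sub_of_emod_eq_emod ?_
    exact congrFun ((Finset.mem_filter.1 hx).2.trans (Finset.mem_filter.1 hy).2.symm) ⟨j, h2⟩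
  · refine mul_le_mul_of_nonneg_left (Finset.sum_le_sum fun c _ => ?_) (Nat.cast_nonneg _)
    have hprod : ∀ α : Fin k → ℝ, ∏ i, ‖fexp k p X (t * b) (c i) α‖ ^ 2 =
        ‖trigSum (Fintype.piFinset fun i => classSet p X (t * b) (c i))
          (fun x => ∑ i, moment k (x i)) α‖ ^ 2 := by
      intro α
      rw [← prod_trigSum, norm_prod, Finset.prod_pow]
      simp_rw [fexp_eq_trigSum]
    simp_rw [hprod]
    refine integral_norm_sq_mul_trigSum_mono (fun x hx => ?_) _ _ _
    rw [hA] at hx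
    obtain ⟨hx1, rfl⟩ := Finset.mem_filter.1 hx
    have hx2 := (Finset.mem_filter.1 (Finset.mem_filter.1 hx1).1).1
    rw [Fintype.mem_piFinset] at hx2 ⊢
    exact fun i => Finset.mem_filter.2 ⟨hx2 i, Int.dvd_self_sub_emod⟩

/-- Summation of products over tuples of classes, with Hölder's inequality for the sum over
classes. -/
theorem sum_integral_prod_le {k r : ℕ} (hr : 1 ≤ r) (Z : Finset ℤ) (S : Finset (Fin r → ℤ))
    (hS : S ⊆ Fintype.piFinset fun _ => Z) {g : ℤ → (Fin k → ℝ) → ℝ} {G : (Fin k → ℝ) → ℝ}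
    (hg : ∀ z, Continuous (g z)) (hg0 : ∀ z α, 0 ≤ g z α) (hG : Continuous G)
    (hG0 : ∀ α, 0 ≤ G α) {B : ℝ} (hB : ∀ z ∈ Z, ∫ α in box k, g z α ^ r * G α ≤ B) :
    ∑ c ∈ S, ∫ α in box k, (∏ i, g (c i) α) * G α ≤ (#Z : ℝ) ^ r * B := by
  have hinteg : ∀ c : Fin r → ℤ, IntegrableOn (fun α => (∏ i, g (c i) α) * G α) (box k) :=
    fun c => integrableOn_box ((continuous_finsetProd _ fun i _ => hg (c i)).mul hG)
  have hinteg' : ∀ z : ℤ, IntegrableOn (fun α => g z α ^ r * G α) (box k) :=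
    fun z => integrableOn_box (((hg z).pow r).mul hG)
  calc ∑ c ∈ S, ∫ α in box k, (∏ i, g (c i) α) * G α
      = ∫ α in box k, ∑ c ∈ S, (∏ i, g (c i) α) * G α :=
        (integral_finsetSum _ fun c _ => hinteg c).symm
    _ ≤ ∫ α in box k, (#Z : ℝ) ^ (r - 1) * ∑ z ∈ Z, g z α ^ r * G α := by
        refine integral_mono (integrable_finsetSum _ fun c _ => hinteg c)
          ((integrable_finsetSum _ fun z _ => hinteg' z).const_mul _) fun α => ?_
        simp only
        rw [← Finset.sum_mul, ← Finset.sum_mul, ← mul_assoc]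
        refine mul_le_mul_of_nonneg_right ?_ (hG0 α)
        refine (Finset.sum_le_sum_of_subset_of_nonneg hS fun c _ _ =>
          Finset.prod_nonneg fun i _ => hg0 _ _).trans ?_
        rw [← Finset.prod_univ_sum (fun _ => Z) (fun _ z => g z α), Finset.prod_const,
          Finset.card_univ, Fintype.card_fin]
        have h := pow_sum_le_card_mul_sum_pow (s := Z) (fun z _ => hg0 z α) (r - 1)
        rwa [Nat.sub_add_cancel hr] at h
    _ = (#Z : ℝ) ^ (r - 1) * ∑ z ∈ Z, ∫ α in box k, g z α ^ r * G α := by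
        rw [integral_const_mul, integral_finsetSum _ fun z _ => hinteg' z]
    _ ≤ (#Z : ℝ) ^ (r - 1) * (#Z * B) := by
        gcongr
        exact (Finset.sum_le_card_nsmul Z _ B hB).trans_eq (nsmul_eq_mul _ _)
    _ = (#Z : ℝ) ^ r * B := by
        rw [← mul_assoc, ← pow_succ, Nat.sub_add_cancel hr]

theorem card_filter_Ico_le {p a c : ℕ} (hp : 0 < p) (hac : a ≤ c) (ξ : ℤ) :
    #((Finset.Ico (0 : ℤ) ((p : ℤ) ^ c)).filter fun z => (p : ℤ) ^ a ∣ z - ξ) ≤ p ^ (c - a) := by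
  have hpa : (0 : ℤ) < (p : ℤ) ^ a := by positivity
  have hcard : #(Finset.Ico (0 : ℤ) ((p : ℤ) ^ (c - a))) = p ^ (c - a) := by
    rw [Int.card_Ico, sub_zero]
    exact_mod_cast Int.toNat_natCast (p ^ (c - a))
  rw [← hcard]
  refine Finset.card_le_card_of_injOn (fun z => z / (p : ℤ) ^ a) ?_ ?_
  · intro z hz
    rw [Finset.mem_coe, Finset.mem_filter, Finset.mem_Ico] at hz
    rw [Finset.mem_coe, Finset.mem_Ico]
    refine ⟨Int.ediv_nonneg hz.1.1 hpa.le, Int.ediv_lt_of_lt_mul hpa ?_⟩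
    rw [← pow_add, Nat.sub_add_cancel hac]
    exact hz.1.2
  · intro z hz z' hz' h
    rw [Finset.mem_coe, Finset.mem_filter] at hz hz'
    simp only at h
    have hmod : z % (p : ℤ) ^ a = z' % (p : ℤ) ^ a :=
      (emod_eq_emod_of_dvd_sub hz.2).trans (emod_eq_emod_of_dvd_sub hz'.2).symm
    rw [← Int.emod_add_mul_ediv z ((p : ℤ) ^ a), ← Int.emod_add_mul_ediv z' ((p : ℤ) ^ a), hmod, h]

theorem continuous_fexp (k p : ℕ) (X : ℝ) (c : ℕ) (ξ : ℤ) : Continuous (fexp k p X c ξ) := by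
  rw [funext (fexp_eq_trigSum k p X c ξ)]
  exact continuous_trigSum _ _

theorem continuous_Fexp {k p r : ℕ} (hp : 0 < p) (X : ℝ) (c : ℕ) (ξ : ℤ) :
    Continuous (Fexp k p r X c ξ) := by
  rw [funext (Fexp_eq_trigSum hp X c ξ)]
  exact continuous_trigSum _ _

/-- The congruencing step in terms of a single residue class modulo `p ^ (t * b)`. -/
theorem integral_le_of_forall_class_le {p k r t a b : ℕ} (hp : p.Prime) (hpk : k < p)
    (hr : 1 ≤ r) (hrk : r ≤ k) (ht : 1 ≤ t) (htk : t ≤ k) (hab : a < b)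
    (hba : (k - t - 1) * a ≤ b) (X : ℝ) (ξ η : ℤ) {B : ℝ} (hB0 : 0 ≤ B)
    (hB : ∀ z : ℤ, ¬ (p : ℤ) ∣ z - η → ∫ α in box k,
      ‖fexp k p X (t * b) z α‖ ^ (2 * r) * ‖Fexp k p r X b η α‖ ^ (2 * t) ≤ B) :
    ∫ α in box k, ‖trigSum ((condSet p r X a ξ).filter fun x => ∀ i, ¬ (p : ℤ) ∣ x i - η)
        (fun x => ∑ i, moment k (x i)) α‖ ^ 2 * ‖Fexp k p r X b η α‖ ^ (2 * t) ≤
      classBound p k r t a b * (((p : ℝ) ^ (t * b - a)) ^ r * B) := by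
  refine (integral_le_sum_residue_classes hp hpk hrk ht htk hab hba X ξ η _ rfl).trans
    (mul_le_mul_of_nonneg_left ?_ (Nat.cast_nonneg _))
  have hatb : a ≤ t * b := hab.le.trans (Nat.le_mul_of_pos_left b ht)
  have htb : t * b ≠ 0 := (Nat.mul_pos ht (Nat.zero_lt_of_lt hab)).ne'
  have hq : (0 : ℤ) < (p : ℤ) ^ (t * b) := by have := hp.pos; positivity
  set Z := ((Finset.Ico (0 : ℤ) ((p : ℤ) ^ (t * b))).filter fun z => (p : ℤ) ^ a ∣ z - ξ).filter
    fun z => ¬ (p : ℤ) ∣ z - η with hZ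
  have hZcard : (#Z : ℝ) ≤ (p : ℝ) ^ (t * b - a) := by
    exact_mod_cast (Finset.card_filter_le _ _).trans (card_filter_Ico_le hp.pos hatb ξ)
  refine (sum_integral_prod_le hr Z _ ?_ (g := fun z α => ‖fexp k p X (t * b) z α‖ ^ 2)
    (G := fun α => ‖Fexp k p r X b η α‖ ^ (2 * t)) (fun z => (continuous_fexp _ _ _ _ _).norm.pow 2)
    (fun z α => by positivity) ((continuous_Fexp hp.pos _ _ _).norm.pow _)
    (fun α => by positivity) (B := B) ?_).trans ?_
  · intro c hc
    obtain ⟨x, hx, rfl⟩ := Finset.mem_image.1 hc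
    have hx1 := Finset.mem_filter.1 hx
    have hx2 := (Finset.mem_filter.1 hx1.1).2.1
    rw [Fintype.mem_piFinset]
    intro i
    have hd : (p : ℤ) ^ (t * b) ∣ x i - x i % (p : ℤ) ^ (t * b) := Int.dvd_self_sub_emod
    have hshift : ∀ {d y : ℤ}, d ∣ (p : ℤ) ^ (t * b) →
        (d ∣ x i % (p : ℤ) ^ (t * b) - y ↔ d ∣ x i - y) := by
      intro d y hdvd
      rw [show x i - y = (x i - x i % (p : ℤ) ^ (t * b)) + (x i % (p : ℤ) ^ (t * b) - y) by ring]
      exact (dvd_add_right (hdvd.trans hd)).symm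
    rw [hZ, Finset.mem_filter, Finset.mem_filter, Finset.mem_Ico,
      hshift (pow_dvd_pow _ hatb), hshift (dvd_pow_self _ htb)]
    exact ⟨⟨⟨Int.emod_nonneg _ hq.ne', Int.emod_lt_of_pos _ hq⟩, hx2 i⟩, hx1.2 i⟩
  · intro z hz
    simp_rw [← pow_mul]
    exact hB z (Finset.mem_filter.1 hz).2
  · gcongr

theorem memLp_box {k : ℕ} {f : (Fin k → ℝ) → ℝ} (hf : Continuous f) {q : ℝ} (hq : 0 < q) :
    MemLp f (ENNReal.ofReal q) ((volume : Measure (Fin k → ℝ)).restrict (box k)) := by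
  rw [← integrable_norm_rpow_iff hf.aestronglyMeasurable (by simpa using hq) ENNReal.ofReal_ne_top,
    ENNReal.toReal_ofReal hq.le]
  exact integrableOn_box (hf.norm.rpow_const fun _ => Or.inr hq.le)

/-- Hölder's inequality separating `f ^ (2 * r) * F ^ (2 * t)`. -/
theorem integral_mul_le_rpow_mul_rpow {k r t : ℕ} (ht : 2 ≤ t) {f F : (Fin k → ℝ) → ℝ}
    (hf : Continuous f) (hF : Continuous F) (hf0 : ∀ α, 0 ≤ f α) (hF0 : ∀ α, 0 ≤ F α) :
    ∫ α in box k, f α ^ (2 * r) * F α ^ (2 * t) ≤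
      (∫ α in box k, F α ^ 2 * f α ^ (2 * (r * t))) ^ (1 / (t : ℝ)) *
      (∫ α in box k, F α ^ (2 * (t + 1))) ^ (1 - 1 / (t : ℝ)) := by
  have ht' : (2 : ℝ) ≤ t := by exact_mod_cast ht
  have ht0 : (0 : ℝ) < t := by linarith
  have ht1 : (0 : ℝ) < t - 1 := by linarith
  have hconj : (t : ℝ).HolderConjugate (t / (t - 1)) := by
    rw [Real.holderConjugate_iff]
    refine ⟨by linarith, ?_⟩
    field_simp
    ring
  have hexp : (0 : ℝ) ≤ 2 * t - 2 / t := by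
    rw [sub_nonneg, div_le_iff₀ ht0]
    nlinarith
  have h := integral_mul_le_Lp_mul_Lq_of_nonneg
    (μ := (volume : Measure (Fin k → ℝ)).restrict (box k)) hconj
    (f := fun α => f α ^ (2 * r) * F α ^ (2 / (t : ℝ)))
    (g := fun α => F α ^ (2 * (t : ℝ) - 2 / t))
    (Eventually.of_forall fun α => mul_nonneg (pow_nonneg (hf0 α) _)
      (Real.rpow_nonneg (hF0 α) _))
    (Eventually.of_forall fun α => Real.rpow_nonneg (hF0 α) _)
    (memLp_box ((hf.pow _).mul (hF.rpow_const fun _ => Or.inr (by positivity))) ht0)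
    (memLp_box (hF.rpow_const fun _ => Or.inr hexp) (by positivity))
  have h1 : ∀ α, f α ^ (2 * r) * F α ^ (2 / (t : ℝ)) * F α ^ (2 * (t : ℝ) - 2 / t) =
      f α ^ (2 * r) * F α ^ (2 * t) := by
    intro α
    rw [mul_assoc, ← Real.rpow_add_of_nonneg (hF0 α) (by positivity) hexp, add_sub_cancel]
    congr 1
    exact_mod_cast Real.rpow_natCast (F α) (2 * t)
  have h2 : ∀ α, (f α ^ (2 * r) * F α ^ (2 / (t : ℝ))) ^ (t : ℝ) =
      F α ^ 2 * f α ^ (2 * (r * t)) := by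
    intro α
    rw [Real.rpow_natCast, mul_pow, ← pow_mul, ← Real.rpow_natCast (F α ^ (2 / (t : ℝ))),
      ← Real.rpow_mul (hF0 α), div_mul_cancel₀ _ ht0.ne', mul_assoc, mul_comm]
    congr 1
    exact_mod_cast Real.rpow_natCast (F α) 2
  have h3 : ∀ α, (F α ^ (2 * (t : ℝ) - 2 / t)) ^ ((t : ℝ) / (t - 1)) = F α ^ (2 * (t + 1)) := by
    intro α
    rw [← Real.rpow_mul (hF0 α), ← Real.rpow_natCast]
    congr 1
    push_cast
    field_simp
    ring
  simp_rw [h1, h2, h3] at h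
  rwa [show 1 / ((t : ℝ) / (t - 1)) = 1 - 1 / (t : ℝ) by field_simp] at h

theorem Iab_le_Imax {k p r s : ℕ} {X : ℝ} {a b : ℕ} {ξ η : ℤ} (h1 : 1 ≤ ξ) (h2 : ξ ≤ (p : ℤ) ^ a)
    (h3 : 1 ≤ η) (h4 : η ≤ (p : ℤ) ^ b) (h : ¬ Int.ModEq (p : ℤ) η ξ) :
    Iab k p r s X a b ξ η ≤ Imax k p r s X a b := by
  refine le_csSup (Set.Finite.bddAbove ?_) ⟨ξ, η, h1, h2, h3, h4, h, rfl⟩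
  refine ((Set.finite_Icc (1 : ℤ) ((p : ℤ) ^ a)).image2 (fun x y => Iab k p r s X a b x y)
    (Set.finite_Icc (1 : ℤ) ((p : ℤ) ^ b))).subset ?_
  rintro v ⟨x, y, hx1, hx2, hy1, hy2, -, rfl⟩
  exact ⟨x, ⟨hx1, hx2⟩, y, ⟨hy1, hy2⟩, rfl⟩

theorem Imax_nonneg (k p r s : ℕ) (X : ℝ) (a b : ℕ) : 0 ≤ Imax k p r s X a b := by
  refine Real.sSup_nonneg ?_
  rintro v ⟨x, y, -, -, -, -, -, rfl⟩
  exact integral_nonneg fun α => by positivity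

theorem integral_Fexp_mul_fexp_le_Imax {k p r s : ℕ} (hp : 0 < p) {X : ℝ} {b c : ℕ}
    (hc : c ≠ 0) {η z : ℤ} (h1 : 1 ≤ η) (h2 : η ≤ (p : ℤ) ^ b) (h : ¬ (p : ℤ) ∣ z - η) :
    ∫ α in box k, ‖Fexp k p r X b η α‖ ^ 2 * ‖fexp k p X c z α‖ ^ (2 * s) ≤
      Imax k p r s X b c := by
  have hq : (0 : ℤ) < (p : ℤ) ^ c := by positivity
  have hd := dvd_sub_posRes ((p : ℤ) ^ c) z
  rw [fexp_congr hd]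
  refine Iab_le_Imax h1 h2 (one_le_posRes hq z) (posRes_le hq z) fun hmod => h ?_
  rw [Int.modEq_comm, Int.modEq_iff_dvd] at hmod
  have h3 := dvd_add ((dvd_pow_self (p : ℤ) hc).trans hd) hmod
  rwa [sub_add_sub_cancel] at h3

theorem integral_norm_trigSum_pow {k : ℕ} {ι : Type*} (S : Finset ι) (P : ι → Fin k → ℤ) (n : ℕ) :
    ∫ α in box k, ‖trigSum S P α‖ ^ (2 * n) =
      #(((Fintype.piFinset fun _ : Fin n => S) ×ˢ (Fintype.piFinset fun _ : Fin n => S)).filter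
        fun z => ∑ i, P (z.1 i) = ∑ i, P (z.2 i)) := by
  have h : ∀ α, ‖trigSum S P α‖ ^ (2 * n) =
      ‖trigSum (Fintype.piFinset fun _ : Fin n => S) (fun x => ∑ i, P (x i)) α‖ ^ 2 := fun α => by
    rw [← trigSum_pow, norm_pow, ← pow_mul, mul_comm]
  simp_rw [h]
  exact integral_norm_sq_trigSum _ _

theorem integral_norm_trigSum_pow_mono {k : ℕ} {ι : Type*} {S T : Finset ι} (hST : S ⊆ T)
    (P : ι → Fin k → ℤ) (n : ℕ) :
    ∫ α in box k, ‖trigSum S P α‖ ^ (2 * n) ≤ ∫ α in box k, ‖trigSum T P α‖ ^ (2 * n) := by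
  rw [integral_norm_trigSum_pow, integral_norm_trigSum_pow, Nat.cast_le]
  have hpi := Fintype.piFinset_subset _ _ fun _ : Fin n => hST
  exact Finset.card_le_card
    (Finset.filter_subset_filter _ (Finset.product_subset_product hpi hpi))

theorem integral_Fexp_pow_le {k p r : ℕ} (hp : 0 < p) (X : ℝ) (b : ℕ) (η : ℤ) (n : ℕ) :
    ∫ α in box k, ‖Fexp k p r X b η α‖ ^ (2 * n) ≤
      ∫ α in box k, ‖fexp k p X b η α‖ ^ (2 * (r * n)) := by
  have hsub : condSet p r X b η ⊆ Fintype.piFinset fun _ => classSet p X b η := by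
    intro x hx
    obtain ⟨h1, h2, -⟩ := Finset.mem_filter.1 hx
    rw [Fintype.mem_piFinset] at h1 ⊢
    exact fun i => Finset.mem_filter.2 ⟨h1 i, h2 i⟩
  have hf : ∀ α : Fin k → ℝ, ‖fexp k p X b η α‖ ^ (2 * (r * n)) =
      ‖trigSum (Fintype.piFinset fun _ : Fin r => classSet p X b η)
        (fun x => ∑ i, moment k (x i)) α‖ ^ (2 * n) := by
    intro α
    rw [← trigSum_pow, fexp_eq_trigSum, norm_pow, ← pow_mul]
    ring_nf
  simp_rw [hf, Fexp_eq_trigSum hp]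
  exact integral_norm_trigSum_pow_mono hsub _ n

/-- Translation-dilation invariance of the Vinogradov mean value. -/
theorem integral_norm_trigSum_moment_affine {k : ℕ} (S : Finset ℤ) {q : ℤ} (hq : q ≠ 0) (η : ℤ)
    (n : ℕ) :
    ∫ α in box k, ‖trigSum S (fun y => moment k (η + q * y)) α‖ ^ (2 * n) ≤
      ∫ α in box k, ‖trigSum S (moment k) α‖ ^ (2 * n) := by
  rw [integral_norm_trigSum_pow, integral_norm_trigSum_pow, Nat.cast_le]
  refine Finset.card_le_card fun z hz => ?_
  rw [Finset.mem_filter] at hz ⊢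
  refine ⟨hz.1, ?_⟩
  have h := (sum_moment_eq_iff _ _ (fun i => η + q * z.1 i) fun i => η + q * z.2 i).1 hz.2
  rw [sum_moment_eq_iff]
  intro j _ hj
  have h1 := sum_sub_pow_eq_of_sum_pow_eq η h hj
  simp only [add_sub_cancel_left, mul_pow, ← Finset.mul_sum] at h1
  exact mul_left_cancel₀ (pow_ne_zero j hq) h1

theorem classSet_subset_image {p b : ℕ} (hp : 0 < p) (X : ℝ) {η : ℤ} (h1 : 1 ≤ η)
    (h2 : η ≤ (p : ℤ) ^ b) :
    classSet p X b η ⊆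
      (Finset.Icc (0 : ℤ) ⌊X / (p : ℝ) ^ b⌋).image fun y => η + (p : ℤ) ^ b * y := by
  intro x hx
  rw [classSet, Finset.mem_filter, Finset.mem_Icc, Int.le_floor] at hx
  obtain ⟨⟨hx1, hx2⟩, y, hy⟩ := hx
  have hq : (0 : ℤ) < (p : ℤ) ^ b := by positivity
  refine Finset.mem_image.2 ⟨y, Finset.mem_Icc.2 ⟨?_, ?_⟩, by linarith⟩
  · by_contra! hneg
    nlinarith
  · rw [Int.le_floor, le_div_iff₀ (by positivity)]
    have hle : y * (p : ℤ) ^ b ≤ x := by linarith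
    have hle' : (y : ℝ) * (p : ℝ) ^ b ≤ x := by exact_mod_cast hle
    exact hle'.trans hx2

theorem trigSum_image {k : ℕ} {ι κ : Type*} [DecidableEq κ] {g : ι → κ} (hg : Function.Injective g)
    (S : Finset ι) (P : κ → Fin k → ℤ) (α : Fin k → ℝ) :
    trigSum (S.image g) P α = trigSum S (fun x => P (g x)) α :=
  Finset.sum_image hg.injOn

theorem Jcount_finite (s k : ℕ) (X : ℝ) : {xy : (Fin s → ℤ) × (Fin s → ℤ) |
    (∀ i, 1 ≤ xy.1 i ∧ (xy.1 i : ℝ) ≤ X) ∧ (∀ i, 1 ≤ xy.2 i ∧ (xy.2 i : ℝ) ≤ X) ∧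
    ∀ j ∈ Finset.Icc 1 k, ∑ i, ((xy.1 i) ^ j - (xy.2 i) ^ j) = 0}.Finite := by
  refine ((Fintype.piFinset fun _ : Fin s => Finset.Icc (1 : ℤ) ⌊X⌋) ×ˢ
    (Fintype.piFinset fun _ : Fin s => Finset.Icc (1 : ℤ) ⌊X⌋)).finite_toSet.subset ?_
  rintro ⟨x, y⟩ ⟨hx, hy, -⟩
  simp only [Finset.mem_coe, Finset.mem_product, Fintype.mem_piFinset, Finset.mem_Icc, Int.le_floor]
  exact ⟨hx, hy⟩

theorem integral_norm_trigSum_Icc_le_Jcount {k : ℕ} (n : ℕ) {L : ℤ} {Y : ℝ} (hL : (L : ℝ) ≤ Y) :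
    ∫ α in box k, ‖trigSum (Finset.Icc 1 L) (moment k) α‖ ^ (2 * n) ≤ Jcount n k Y := by
  rw [integral_norm_trigSum_pow, Nat.cast_le, Jcount, ← Set.ncard_coe_finset]
  refine Set.ncard_le_ncard ?_ (Jcount_finite n k Y)
  rintro ⟨x, y⟩ hz
  simp only [Finset.coe_filter, Finset.mem_product, Fintype.mem_piFinset, Finset.mem_Icc,
    Set.mem_ofPred_eq, sum_moment_eq_iff] at hz
  have hle : ∀ {u : ℤ}, u ≤ L → (u : ℝ) ≤ Y := fun hu => (Int.cast_le.2 hu).trans hL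
  refine ⟨fun i => ⟨(hz.1.1 i).1, hle (hz.1.1 i).2⟩, fun i => ⟨(hz.1.2 i).1, hle (hz.1.2 i).2⟩,
    fun j hj => ?_⟩
  rw [Finset.sum_sub_distrib, sub_eq_zero]
  exact hz.2 j (Finset.mem_Icc.1 hj).1 (Finset.mem_Icc.1 hj).2

theorem one_le_Jcount (n k : ℕ) {Y : ℝ} (hY : 1 ≤ Y) : 1 ≤ Jcount n k Y := by
  rw [Nat.succ_le_iff, Jcount, Set.ncard_pos (Jcount_finite n k Y)]
  exact ⟨(fun _ => 1, fun _ => 1), fun _ => ⟨le_rfl, by simpa using hY⟩,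
    fun _ => ⟨le_rfl, by simpa using hY⟩, fun j _ => by simp⟩

theorem integral_box_one (k : ℕ) : ∫ _ in box k, (1 : ℝ) = 1 := by
  rw [setIntegral_const, Measure.real]
  unfold _root_.box
  rw [Real.volume_pi_Ico_toReal (fun _ => zero_le_one)]
  simp

theorem integral_norm_trigSum_Icc_zero_le {k : ℕ} (n : ℕ) {L : ℤ} (hL : 0 ≤ L) :
    ∫ α in box k, ‖trigSum (Finset.Icc 0 L) (moment k) α‖ ^ (2 * n) ≤
      2 ^ (2 * n) * (1 + ∫ α in box k, ‖trigSum (Finset.Icc 1 L) (moment k) α‖ ^ (2 * n)) := by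
  have hinteg : ∀ S : Finset ℤ,
      IntegrableOn (fun α => ‖trigSum S (moment k) α‖ ^ (2 * n)) (box k) :=
    fun S => integrableOn_box ((continuous_trigSum _ _).norm.pow _)
  have hone : IntegrableOn (fun _ : Fin k → ℝ => (1 : ℝ)) (box k) :=
    integrableOn_box continuous_const
  calc ∫ α in box k, ‖trigSum (Finset.Icc 0 L) (moment k) α‖ ^ (2 * n)
      ≤ ∫ α in box k, 2 ^ (2 * n) *
          (1 + ‖trigSum (Finset.Icc 1 L) (moment k) α‖ ^ (2 * n)) := by
        refine integral_mono (hinteg _) ((hone.add (hinteg _)).const_mul _) fun α => ?_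
        have hsplit : trigSum (Finset.Icc 0 L) (moment k) α =
            chi (moment k 0) α + trigSum (Finset.Icc 1 L) (moment k) α := by
          have h01 : Finset.Icc (0 : ℤ) L = insert 0 (Finset.Icc 1 L) := by
            ext x
            simp only [Finset.mem_Icc, Finset.mem_insert]
            omega
          rw [trigSum, h01, Finset.sum_insert (by simp), trigSum]
        simp only
        rw [hsplit]
        have hle : ‖chi (moment k 0) α + trigSum (Finset.Icc 1 L) (moment k) α‖ ≤
            1 + ‖trigSum (Finset.Icc 1 L) (moment k) α‖ :=
          (norm_add_le _ _).trans_eq (by rw [norm_chi])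
        refine (pow_le_pow_left₀ (norm_nonneg _) hle _).trans
          ((add_pow_le zero_le_one (norm_nonneg _) _).trans ?_)
        rw [one_pow]
        gcongr
        · norm_num
        · exact Nat.sub_le _ _
    _ = _ := by rw [integral_const_mul, integral_add hone (hinteg _), integral_box_one]

/-- The mean value of the conditioned sum is controlled by the Vinogradov mean value. -/
theorem integral_Fexp_pow_le_Jcount {k p r b : ℕ} (hp : 0 < p) {X Y : ℝ} (hX : 0 ≤ X) {η : ℤ}
    (h1 : 1 ≤ η) (h2 : η ≤ (p : ℤ) ^ b) (n : ℕ) (hY : 1 ≤ Y) (hXY : X / (p : ℝ) ^ b ≤ Y) :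
    ∫ α in box k, ‖Fexp k p r X b η α‖ ^ (2 * n) ≤
      2 ^ (2 * (r * n) + 1) * Jcount (r * n) k Y := by
  have hq : (p : ℤ) ^ b ≠ 0 := by positivity
  have hinj : Function.Injective fun y : ℤ => η + (p : ℤ) ^ b * y := fun y z hyz =>
    mul_left_cancel₀ hq (add_left_cancel hyz)
  refine (integral_Fexp_pow_le hp X b η n).trans ?_
  set L := ⌊X / (p : ℝ) ^ b⌋ with hLdef
  have hL : 0 ≤ L := Int.floor_nonneg.2 (by positivity)
  have hJ : (1 : ℝ) ≤ Jcount (r * n) k Y := by exact_mod_cast one_le_Jcount (r * n) k hY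
  have hmono : ∫ α in box k, ‖fexp k p X b η α‖ ^ (2 * (r * n)) ≤
      ∫ α in box k, ‖trigSum (Finset.Icc 0 L) (fun y => moment k (η + (p : ℤ) ^ b * y)) α‖
        ^ (2 * (r * n)) := by
    simp_rw [← trigSum_image hinj _ (moment k), fexp_eq_trigSum]
    exact integral_norm_trigSum_pow_mono (classSet_subset_image hp X h1 h2) _ _
  refine hmono.trans ((integral_norm_trigSum_moment_affine _ hq η _).trans
    ((integral_norm_trigSum_Icc_zero_le _ hL).trans ?_))
  have hJ' := integral_norm_trigSum_Icc_le_Jcount (k := k) (r * n)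
    ((Int.floor_le (X / (p : ℝ) ^ b)).trans hXY)
  rw [pow_succ, mul_assoc]
  gcongr
  linarith

theorem sum_Ioc_cast {m n : ℕ} (h : m ≤ n) :
    ∑ j ∈ Finset.Ioc m n, (j : ℝ) = ((n : ℝ) * (n + 1) - m * (m + 1)) / 2 := by
  induction n, h using Nat.le_induction with
  | base => simp
  | succ n hmn ih =>
    rw [Finset.sum_Ioc_succ_top hmn, ih]
    push_cast
    ring

theorem cast_sum_Ioc_sub_mul {k r t : ℕ} (b : ℕ) (hrk : r ≤ k) (hrt : k ≤ r + t) :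
    ((∑ j ∈ Finset.Ioc (k - r) t, (t - j) * b : ℕ) : ℝ) = muC k r t * b := by
  have hle : k - r ≤ t := by omega
  have hterm : ∀ j ∈ Finset.Ioc (k - r) t, (((t - j) * b : ℕ) : ℝ) = ((t : ℝ) - j) * b :=
    fun j hj => by rw [Nat.cast_mul, Nat.cast_sub (Finset.mem_Ioc.1 hj).2]
  rw [Nat.cast_sum, Finset.sum_congr rfl hterm, ← Finset.sum_mul, Finset.sum_sub_distrib,
    sum_Ioc_cast hle, Finset.sum_const, Nat.card_Ioc, nsmul_eq_mul, Nat.cast_sub hle,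
    Nat.cast_sub hrk, muC]
  ring

theorem cast_sum_Ioc_pred_mul {k r t : ℕ} (a : ℕ) (htk : t ≤ k) (hrt : k ≤ r + t) :
    ((∑ h ∈ Finset.Ioc (k - t) r, (h - 1) * a : ℕ) : ℝ) = nuC k r t * a := by
  have hle : k - t ≤ r := by omega
  have hterm : ∀ h ∈ Finset.Ioc (k - t) r, (((h - 1) * a : ℕ) : ℝ) = ((h : ℝ) - 1) * a := by
    intro h hh
    rw [Nat.cast_mul, Nat.cast_sub (Nat.zero_lt_of_lt (Finset.mem_Ioc.1 hh).1), Nat.cast_one]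
  rw [Nat.cast_sum, Finset.sum_congr rfl hterm, ← Finset.sum_mul, Finset.sum_sub_distrib,
    sum_Ioc_cast hle, Finset.sum_const, Nat.card_Ioc, nsmul_eq_mul, Nat.cast_sub hle,
    Nat.cast_sub htk, nuC]
  ring

theorem sum_Ioc_mul_le {m n c : ℕ} (b : ℕ) (f : ℕ → ℕ) (hf : ∀ j ∈ Finset.Ioc m n, f j ≤ c) :
    ∑ j ∈ Finset.Ioc m n, f j * b ≤ n * c * b := by
  rw [← Finset.sum_mul]
  refine Nat.mul_le_mul_right b ((Finset.sum_le_card_nsmul _ _ _ hf).trans ?_)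
  rw [smul_eq_mul, Nat.card_Ioc]
  exact Nat.mul_le_mul_right c (Nat.sub_le _ _)

theorem pow_le_two_pow_mul_rpow {p M e : ℝ} {n B : ℕ} (hp0 : 0 ≤ p) (hM : 0 ≤ M) (hp : p ≤ 2 * M)
    (hn : (n : ℝ) = e) (hB : n ≤ B) : p ^ n ≤ 2 ^ B * M ^ e := by
  refine (pow_le_pow_left₀ hp0 hp n).trans ?_
  rw [mul_pow, ← hn, Real.rpow_natCast]
  exact mul_le_mul_of_nonneg_right (pow_le_pow_right₀ one_le_two hB) (by positivity)

theorem classBound_le {p k r t a b B : ℕ} {M : ℝ} (hM : 0 < M) (hp : (p : ℝ) ≤ 2 * M)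
    (hrk : r ≤ k) (htk : t ≤ k) (hrt : k ≤ r + t) (ha : a ≤ B) (hb : b ≤ B) :
    (classBound p k r t a b : ℝ) ≤
      2 ^ (t * t * B) * 2 ^ (r * r * B) * r ^ r * M ^ (muC k r t * b + nuC k r t * a) := by
  have h1 := pow_le_two_pow_mul_rpow (Nat.cast_nonneg p) hM.le hp (cast_sum_Ioc_sub_mul b hrk hrt)
    ((sum_Ioc_mul_le (c := t) b (fun j => t - j) fun j _ => Nat.sub_le _ _).trans
      (Nat.mul_le_mul_left _ hb))
  have h2 := pow_le_two_pow_mul_rpow (Nat.cast_nonneg p) hM.le hp (cast_sum_Ioc_pred_mul a htk hrt)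
    ((sum_Ioc_mul_le (c := r) a (fun h => h - 1) fun h hh =>
      (Nat.sub_le _ _).trans (Finset.mem_Ioc.1 hh).2).trans (Nat.mul_le_mul_left _ ha))
  rw [classBound]
  push_cast at h1 h2 ⊢
  rw [Real.rpow_add hM]
  calc _ ≤ (2 ^ (t * t * B) * M ^ (muC k r t * b)) *
        ((2 ^ (r * r * B) * M ^ (nuC k r t * a)) * (r : ℝ) ^ r) := by gcongr
    _ = _ := by ring

/-- The constant in the congruencing bound, where `B` is an upper bound for `b`. -/
def congruencingConst (r t B : ℕ) : ℝ :=
  2 ^ (t * t * B) * 2 ^ (r * r * B) * r ^ r * (2 ^ (t * B)) ^ r * 2 ^ (2 * (r * (t + 1)) + 1)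

theorem congruencingConst_pos {r : ℕ} (hr : 1 ≤ r) (t B : ℕ) : 0 < congruencingConst r t B := by
  unfold congruencingConst
  positivity

theorem integral_condSet_le {p k r t a b B : ℕ} {M X : ℝ} (hp : p.Prime) (hpk : k < p)
    (hr : 1 ≤ r) (hrk : r ≤ k) (ht : 2 ≤ t) (htk : t ≤ k) (hrt : k ≤ r + t) (hab : a < b)
    (hba : (k - t - 1) * a ≤ b) (hbB : b ≤ B) (hX : 0 ≤ X) (hM : 0 < M) (hMp : M ≤ p)
    (hpM : (p : ℝ) ≤ 2 * M) (hY : 1 ≤ X / M ^ b) (ξ : ℤ) {η : ℤ} (h1 : 1 ≤ η)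
    (h2 : η ≤ (p : ℤ) ^ b) :
    ∫ α in box k, ‖trigSum ((condSet p r X a ξ).filter fun x => ∀ i, ¬ (p : ℤ) ∣ x i - η)
        (fun x => ∑ i, moment k (x i)) α‖ ^ 2 * ‖Fexp k p r X b η α‖ ^ (2 * t) ≤
      congruencingConst r t B * M ^ (muC k r t * b + nuC k r t * a)
        * (M ^ ((t : ℝ) * b - a)) ^ r
        * (Jcount (r * (t + 1)) k (X / M ^ b) : ℝ) ^ (1 - 1 / (t : ℝ))
        * (Imax k p r (r * t) X b (t * b)) ^ (1 / (t : ℝ)) := by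
  have ht1 : 1 ≤ t := by omega
  have hatb : a ≤ t * b := hab.le.trans (Nat.le_mul_of_pos_left b ht1)
  have htb : t * b ≠ 0 := (Nat.mul_pos ht1 (Nat.zero_lt_of_lt hab)).ne'
  have htinv : 1 / (t : ℝ) ≤ 1 := by
    rw [div_le_one (by positivity)]
    exact_mod_cast ht1
  have htinv0 : 0 ≤ 1 / (t : ℝ) := by positivity
  have hI0 := Imax_nonneg k p r (r * t) X b (t * b)
  have hXY : X / (p : ℝ) ^ b ≤ X / M ^ b := by gcongr
  set J : ℝ := (Jcount (r * (t + 1)) k (X / M ^ b) : ℝ) with hJ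
  have hJ0 : 0 ≤ J := Nat.cast_nonneg _
  have hclass : ∀ z : ℤ, ¬ (p : ℤ) ∣ z - η → ∫ α in box k,
      ‖fexp k p X (t * b) z α‖ ^ (2 * r) * ‖Fexp k p r X b η α‖ ^ (2 * t) ≤
      (Imax k p r (r * t) X b (t * b)) ^ (1 / (t : ℝ)) *
        (2 ^ (2 * (r * (t + 1)) + 1) * J ^ (1 - 1 / (t : ℝ))) := by
    intro z hz
    refine (integral_mul_le_rpow_mul_rpow ht (continuous_fexp _ _ _ _ _).norm
      (continuous_Fexp hp.pos _ _ _).norm (fun _ => norm_nonneg _) fun _ => norm_nonneg _).trans ?_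
    refine mul_le_mul (Real.rpow_le_rpow (integral_nonneg fun α => by positivity)
      (integral_Fexp_mul_fexp_le_Imax hp.pos htb h1 h2 hz) htinv0) ?_
      (Real.rpow_nonneg (integral_nonneg fun α => by positivity) _) (Real.rpow_nonneg hI0 _)
    refine (Real.rpow_le_rpow (integral_nonneg fun α => by positivity)
      (integral_Fexp_pow_le_Jcount hp.pos hX h1 h2 (t + 1) hY hXY) (by linarith)).trans ?_
    rw [Real.mul_rpow (by positivity) hJ0]
    refine mul_le_mul_of_nonneg_right ?_ (Real.rpow_nonneg hJ0 _)
    exact (Real.rpow_le_rpow_of_exponent_le (one_le_pow₀ one_le_two) (by linarith)).trans_eq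
      (Real.rpow_one _)
  refine (integral_le_of_forall_class_le hp hpk hr hrk ht1 htk hab hba X ξ η
    (by positivity) hclass).trans ?_
  have hpow : (p : ℝ) ^ (t * b - a) ≤ 2 ^ (t * B) * M ^ ((t : ℝ) * b - a) :=
    pow_le_two_pow_mul_rpow (Nat.cast_nonneg p) hM.le hpM (by push_cast [Nat.cast_sub hatb]; rfl)
      ((Nat.sub_le _ _).trans (Nat.mul_le_mul_left _ hbB))
  have hcl := classBound_le (p := p) hM hpM hrk htk hrt (hab.le.trans hbB) hbB
  calc _ ≤ (2 ^ (t * t * B) * 2 ^ (r * r * B) * r ^ r * M ^ (muC k r t * b + nuC k r t * a)) *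
        ((2 ^ (t * B) * M ^ ((t : ℝ) * b - a)) ^ r *
          ((Imax k p r (r * t) X b (t * b)) ^ (1 / (t : ℝ)) *
            (2 ^ (2 * (r * (t + 1)) + 1) * J ^ (1 - 1 / (t : ℝ))))) := by gcongr
    _ = _ := by
      rw [congruencingConst, mul_pow]
      ring

theorem thetaC_pos {t : ℕ} (ht : 1 ≤ t) (N : ℕ) : 0 < thetaC t N :=
  Real.rpow_pos_of_pos (by positivity) _

theorem one_le_div_Mval_pow {t N b : ℕ} (ht : 1 ≤ t) {X : ℝ} (hX : 1 ≤ X)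
    (hb : (b : ℝ) ≤ (thetaC t N)⁻¹) : 1 ≤ X / Mval t N X ^ b := by
  have hX0 : 0 < X := by linarith
  have hθ := thetaC_pos ht N
  have hθb : thetaC t N * b ≤ 1 :=
    (mul_le_mul_of_nonneg_left hb hθ.le).trans_eq (mul_inv_cancel₀ hθ.ne')
  rw [Mval, ← Real.rpow_natCast, ← Real.rpow_mul hX0.le, le_div_iff₀ (Real.rpow_pos_of_pos hX0 _),
    one_mul]
  exact (Real.rpow_le_rpow_of_exponent_le hX hθb).trans_eq (Real.rpow_one X)

/-- Lemma 5.1: for 0 ≤ a < b ≤ θ⁻¹ with b ≥ (k-t-1)a one has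
K_{a,b}(X) ≤ C M^{μb+νa} (M^{tb-a})^r J_{s+r}(X/M^b)^{1-1/t} I_{b,tb}(X)^{1/t}. -/
theorem lemma5_1 (k r t : ℕ) (hk : 2 ≤ k)
    (ht1 : max 2 (((k : ℝ) - 1) / 2) ≤ (t : ℝ)) (ht2 : t ≤ k)
    (hr1 : 1 ≤ r) (hr2 : r ≤ k) (hrt : k ≤ r + t) :
    ∃ P₀ : ℝ, ∃ N₀ : ℕ, ∀ N : ℕ, N₀ ≤ N →
    ∃ C : ℝ, 0 < C ∧ ∃ X₀ : ℝ, ∀ X : ℝ, X₀ ≤ X →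
    ∀ p : ℕ, p.Prime → P₀ < (p:ℝ) → Mval t N X < (p:ℝ) → (p:ℝ) ≤ 2 * Mval t N X →
    ∀ a b : ℕ, a < b → (b:ℝ) ≤ (thetaC t N)⁻¹ → ((k:ℝ) - t - 1) * a ≤ (b:ℝ) →
      Kmax k p r t X a b ≤
        C * Mval t N X ^ (muC k r t * b + nuC k r t * a)
          * (Mval t N X ^ ((t:ℝ)*b - a)) ^ r
          * ((Jcount (r*(t+1)) k (X / Mval t N X ^ b) : ℝ)) ^ (1 - 1/(t:ℝ))
          * (Imax k p r (r*t) X b (t*b)) ^ (1/(t:ℝ)) := by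

  have ht : 2 ≤ t := by exact_mod_cast (le_max_left _ _).trans ht1
  refine ⟨k, 0, fun N _ => ⟨congruencingConst r t ⌊(thetaC t N)⁻¹⌋₊,
    congruencingConst_pos hr1 _ _, 1, ?_⟩⟩
  intro X hX p hp hpk hMp hpM a b hab hb hba
  have hX0 : 0 < X := by linarith
  have hM : 0 < Mval t N X := Real.rpow_pos_of_pos hX0 _
  have hba' : (k - t - 1) * a ≤ b := by
    rcases Nat.lt_or_ge t k with htk | htk
    · have h : ((k - t - 1 : ℕ) : ℝ) = (k : ℝ) - t - 1 := by
        rw [Nat.cast_sub (by omega), Nat.cast_sub ht2, Nat.cast_one]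
      rw [← h] at hba
      exact_mod_cast hba
    · rw [show k - t - 1 = 0 by omega, zero_mul]
      exact Nat.zero_le b
  have hbound := fun (ξ : ℤ) {η : ℤ} => integral_condSet_le (a := a) (η := η) hp
    (by exact_mod_cast hpk) hr1 hr2 ht ht2 hrt hab hba' (Nat.le_floor hb) hX0.le hM hMp.le hpM
    (one_le_div_Mval_pow (by omega) hX hb) ξ
  have hI0 := Imax_nonneg k p r (r * t) X b (t * b)
  have hC := congruencingConst_pos hr1 t ⌊(thetaC t N)⁻¹⌋₊
  rw [Kmax]
  split_ifs with ha
  · refine Real.sSup_le ?_ (by positivity)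
    rintro v ⟨η, h1, h2, rfl⟩
    simp_rw [Ktilde, Ftilde_eq_trigSum hp.pos]
    subst ha
    exact hbound 0 h1 h2
  · refine Real.sSup_le ?_ (by positivity)
    rintro v ⟨ξ, η, -, -, h1, h2, h3, rfl⟩
    rw [Int.modEq_comm, Int.modEq_iff_dvd] at h3
    rw [Kab, funext (Fexp_eq_trigSum hp.pos X a ξ), ← filter_condSet_eq ha h3]
    exact hbound ξ h1 h2

end
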